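/- Let n ≥ 1 and let K be a smooth, strictly convex body in ℝ^{n+1} with positive support function h, and let X(x) = ∇h_K(x). Then n·∫ |X|² dV ≤ ∫ h(x)·tr A(x) dV + n·|∫ X dV|²/(∫ dV), where tr A(x) is the trace of the Hessian endomorphism A(x) (which equals the spherical quantity Δ̄h + n h at x ∈ S^n). -/

import Mathlib

open MeasureTheory Metric Real
open scoped InnerProductSpace ENNReal Topology

noncomputable section

/-- Euclidean space `ℝ^{n+1}`. -/
abbrev Eu (n : ℕ) : Type := EuclideanSpace ℝ (Fin (n + 1))

/-- The unit sphere `S^n ⊆ ℝ^{n+1}` as a subtype. -/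
abbrev Sph (n : ℕ) : Type := Metric.sphere (0 : Eu n) 1

/-- The spherical Lebesgue (surface) measure on `S^n`. -/
def sphMeas (n : ℕ) : Measure (Sph n) := (volume : Measure (Eu n)).toSphere

/-- The support function of a set `K ⊆ ℝ^{n+1}`. -/
def sfn {n : ℕ} (K : Set (Eu n)) (z : Eu n) : ℝ :=
  sSup ((fun y => ⟪z, y⟫_ℝ) '' K)

/-- The Hessian endomorphism `A(x) = D(∇ h_K)(x)`. -/
def hessA {n : ℕ} (K : Set (Eu n)) (x : Eu n) : Eu n →L[ℝ] Eu n :=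
  fderiv ℝ (gradient (sfn K)) x

/-- The rank-one endomorphism `x ⊗ x : v ↦ ⟨v, x⟩ x`. -/
def tens {n : ℕ} (x : Eu n) : Eu n →L[ℝ] Eu n :=
  (innerSL ℝ x).smulRight x

/-- `det (A(x) + x ⊗ x)`, the reciprocal Gauss curvature `1/𝒦` at `x ∈ S^n`. -/
def rK {n : ℕ} (K : Set (Eu n)) (x : Eu n) : ℝ :=
  LinearMap.det ((hessA K x + tens x : Eu n →L[ℝ] Eu n) : Eu n →ₗ[ℝ] Eu n)

/-- `K` is a smooth, strictly convex body with positive support function. -/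
structure IsSmoothConvexBody {n : ℕ} (K : Set (Eu n)) : Prop where
  compact : IsCompact K
  convex : Convex ℝ K
  interior_nonempty : (interior K).Nonempty
  pos : ∀ x : Sph n, 0 < sfn K x
  smooth : ContDiffOn ℝ (⊤ : ℕ∞) (sfn K) {(0 : Eu n)}ᶜ
  posdef : ∀ x : Sph n, ∀ v : Eu n, v ≠ 0 →
    0 < ⟪(hessA K (x : Eu n) + tens (x : Eu n)) v, v⟫_ℝ

/-- The density `h·det(A + x⊗x)` of the measure `dV` with respect to `dθ`. -/
def dens {n : ℕ} (K : Set (Eu n)) (x : Eu n) : ℝ := sfn K x * rK K x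

/-- The centroid-type point `c(K) = (∫ ∇h_K dV)/(∫ dV)`. -/
def cK {n : ℕ} (K : Set (Eu n)) : Eu n :=
  (∫ x : Sph n, dens K x ∂sphMeas n)⁻¹ •
    ∫ x : Sph n, dens K x • gradient (sfn K) x ∂sphMeas n

/-- The support function of the translated body `K - c(K)`. -/
def tsfn {n : ℕ} (K : Set (Eu n)) (x : Eu n) : ℝ := sfn K x - ⟪x, cK K⟫_ℝ


open scoped InnerProductSpace ENNReal Topology


/-- One-dimensional Brunn-Minkowski in midpoint form. -/
lemma bm_one_dim {A B C : Set ℝ} (hA : MeasurableSet A) (hB : MeasurableSet B)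
    (hAn : A.Nonempty) (hBn : B.Nonempty)
    (h : ∀ a ∈ A, ∀ b ∈ B, (a + b) / 2 ∈ C) :
    volume A + volume B ≤ 2 * volume C := by
  set D : Set ℝ := (fun x => (2⁻¹ : ℝ) * x) ⁻¹' C with hD
  have hDv : volume D = 2 * volume C := by
    rw [hD, Real.volume_preimage_mul_left (by norm_num)]
    congr 1
    simp
  rw [← hDv]
  obtain ⟨a0, ha0⟩ := hAn
  obtain ⟨b0, hb0⟩ := hBn
  have key : ∀ A' B' : Set ℝ, IsCompact A' → IsCompact B' → A' ⊆ A → B' ⊆ B →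
      A'.Nonempty → B'.Nonempty → volume A' + volume B' ≤ volume D := by
    intro A' B' hA' hB' hAA hBB hAn hBn
    have ha := hA'.sSup_mem hAn
    have hb := hB'.sInf_mem hBn
    set a := sSup A'
    set b := sInf B'
    have h1 : volume A' = volume ((fun x => x - b) ⁻¹' A') := by
      simp only [sub_eq_add_neg]
      rw [measure_preimage_add_right]
    have h2 : volume B' = volume ((fun x => x - a) ⁻¹' B') := by
      simp only [sub_eq_add_neg]
      rw [measure_preimage_add_right]
    have hmB : MeasurableSet ((fun x => x - a) ⁻¹' B') :=
      (measurable_id.sub_const a) hB'.measurableSet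
    rw [h1, h2, ← measure_union₀ hmB.nullMeasurableSet]
    · apply measure_mono
      rintro x (hx | hx)
      · have := h _ (hAA hx) _ (hBB hb)
        simp only [hD, Set.mem_preimage]
        convert this using 1; ring
      · have := h _ (hAA ha) _ (hBB hx)
        simp only [hD, Set.mem_preimage]
        convert this using 1; ring
    · refine measure_mono_null (t := {a + b}) ?_ (by simp)
      rintro x ⟨hx1, hx2⟩
      have h1 := le_csSup hA'.bddAbove hx1
      have h2 := csInf_le hB'.bddBelow hx2
      simp only [Set.mem_singleton_iff]
      apply le_antisymm <;> simp only [a, b] at * <;> linarith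
  rw [hA.measure_eq_iSup_isCompact, hB.measure_eq_iSup_isCompact]
  have aux : ∀ A' : Set ℝ, A' ⊆ A → IsCompact A' → ∀ B' : Set ℝ, B' ⊆ B → IsCompact B' →
      volume A' + volume B' ≤ volume D := by
    intro A' hA1 hA2 B' hB1 hB2
    refine le_trans (add_le_add (measure_mono (Set.subset_insert a0 A'))
      (measure_mono (Set.subset_insert b0 B'))) ?_
    exact key _ _ (hA2.insert _) (hB2.insert _) (Set.insert_subset ha0 hA1)
      (Set.insert_subset hb0 hB1) (Set.insert_nonempty _ _) (Set.insert_nonempty _ _)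
  simp_rw [iSup_and']
  exact ENNReal.biSup_add_biSup_le' ⟨∅, by simp⟩ ⟨∅, by simp⟩
    fun A' hA' B' hB' => aux A' hA'.1 hA'.2 B' hB'.1 hB'.2

lemma pl_one_norm {f g m : ℝ → ℝ} (hf : Measurable f) (hg : Measurable g) (hm : Measurable m)
    (hf0 : ∀ x, 0 ≤ f x) (hg0 : ∀ x, 0 ≤ g x) (hm0 : ∀ x, 0 ≤ m x)
    (hf1 : ∀ x, f x ≤ 1) (hg1 : ∀ x, g x ≤ 1)
    (hfs : ∀ l < 1, ∃ x, l < f x) (hgs : ∀ l < 1, ∃ x, l < g x)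
    (h : ∀ a b, f a * g b ≤ m ((a + b) / 2) ^ 2) :
    (∫⁻ x, ENNReal.ofReal (f x)) + (∫⁻ x, ENNReal.ofReal (g x)) ≤
      2 * ∫⁻ x, ENNReal.ofReal (m x) := by
  rw [lintegral_eq_lintegral_meas_lt _ (.of_forall hf0) hf.aemeasurable,
    lintegral_eq_lintegral_meas_lt _ (.of_forall hg0) hg.aemeasurable,
    lintegral_eq_lintegral_meas_lt _ (.of_forall hm0) hm.aemeasurable]
  rw [← lintegral_const_mul' _ _ (by simp), ← lintegral_add_left']
  · apply setLIntegral_mono' measurableSet_Ioi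
    intro t ht
    rcases lt_or_ge t 1 with h1 | h1
    · refine bm_one_dim (measurableSet_lt measurable_const hf)
        (measurableSet_lt measurable_const hg) (hfs t h1) (hgs t h1) ?_
      intro a ha b hb
      have := h a b
      simp only [Set.mem_ofPred_eq, Set.mem_Ioi] at *
      by_contra hc
      push Not at hc
      have := hm0 ((a + b) / 2)
      nlinarith
    · have e1 : {a | t < f a} = ∅ := by
        ext x; simpa using (hf1 x).trans h1
      have e2 : {a | t < g a} = ∅ := by
        ext x; simpa using (hg1 x).trans h1
      simp [e1, e2]
  · apply Measurable.aemeasurable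
    apply Antitone.measurable
    intro s t hst
    exact measure_mono fun x (hx : t < f x) => lt_of_le_of_lt hst hx

lemma ennreal_amgm {x y z : ℝ≥0∞} (h : x + y ≤ 2 * z) : x * y ≤ z ^ 2 := by
  by_cases hz : z = ⊤
  · simp [hz]
  have hf : x + y ≠ ⊤ := ne_top_of_le_ne_top (ENNReal.mul_ne_top (by simp) hz) h
  have hx : x ≠ ⊤ := fun h => hf (by simp [h])
  have hy : y ≠ ⊤ := fun h => hf (by simp [h])
  lift x to NNReal using hx
  lift y to NNReal using hy
  lift z to NNReal using hz
  norm_cast at *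
  have h' : (x : ℝ) + y ≤ 2 * z := by exact_mod_cast h
  have : (x : ℝ) * y ≤ z ^ 2 := by
    have := x.2; have := y.2
    nlinarith [sq_nonneg ((x : ℝ) - y), x.coe_nonneg, y.coe_nonneg, z.coe_nonneg]
  exact_mod_cast this

/-- bounded one-dimensional Prekopa-Leindler -/
lemma pl_one_bdd {f g m : ℝ → ℝ≥0∞} (hf : Measurable f) (hg : Measurable g) (hm : Measurable m)
    (hfb : (⨆ x, f x) ≠ ⊤) (hgb : (⨆ x, g x) ≠ ⊤)
    (h : ∀ a b, f a * g b ≤ m ((a + b) / 2) ^ 2) :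
    (∫⁻ x, f x) * (∫⁻ x, g x) ≤ (∫⁻ x, m x) ^ 2 := by
  by_cases hA0 : (⨆ x, f x) = 0
  · have : f = fun _ => 0 := by
      ext x
      have := le_iSup f x
      rw [hA0] at this
      simpa using this
    simp [this]
  by_cases hB0 : (⨆ x, g x) = 0
  · have : g = fun _ => 0 := by
      ext x
      have := le_iSup g x
      rw [hB0] at this
      simpa using this
    simp [this]
  set A := ⨆ x, f x with hA
  set B := ⨆ x, g x with hB
  obtain ⟨c, hc⟩ : ∃ c : ℝ≥0∞, c ^ 2 = A * B := by
    refine ⟨(A * B) ^ (1 / 2 : ℝ), ?_⟩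
    rw [← ENNReal.rpow_natCast, ← ENNReal.rpow_mul]
    norm_num
  have hc0 : c ≠ 0 := by
    rintro rfl
    simp [hA0, hB0] at hc
  have hct : c ≠ ⊤ := by
    rintro rfl
    have := ENNReal.mul_ne_top hfb hgb
    rw [← hc] at this
    simp at this
  have hfle : ∀ x, f x / A ≤ 1 := fun x => ENNReal.div_le_of_le_mul (by simpa using le_iSup f x)
  have hgle : ∀ x, g x / B ≤ 1 := fun x => ENNReal.div_le_of_le_mul (by simpa using le_iSup g x)
  have hft : ∀ x, f x / A ≠ ⊤ := fun x => ne_top_of_le_ne_top (by simp) (hfle x)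
  have hgt : ∀ x, g x / B ≠ ⊤ := fun x => ne_top_of_le_ne_top (by simp) (hgle x)
  have hmt : ∀ x, min (m x / c) 1 ≠ ⊤ := fun x => ne_top_of_le_ne_top (by simp) (min_le_right _ _)
  have exF : ∀ (u : ℝ → ℝ≥0∞) (U : ℝ≥0∞), U = (⨆ x, u x) → U ≠ 0 → U ≠ ⊤ →
      (∀ x, u x / U ≠ ⊤) → ∀ l < (1 : ℝ), ∃ x, l < (u x / U).toReal := by
    intro u U hU hU0 hUt hut l hl
    by_cases hl0 : l < 0
    · exact ⟨0, lt_of_lt_of_le hl0 ENNReal.toReal_nonneg⟩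
    push Not at hl0
    have h1 : ENNReal.ofReal l * U < ⨆ x, u x := by
      rw [← hU]
      calc ENNReal.ofReal l * U < 1 * U :=
            ENNReal.mul_lt_mul_left hU0 hUt (by simpa using hl)
        _ = U := one_mul _
    obtain ⟨x, hx⟩ := lt_iSup_iff.1 h1
    refine ⟨x, ?_⟩
    rw [← ENNReal.ofReal_lt_iff_lt_toReal hl0 (hut x)]
    exact (ENNReal.lt_div_iff_mul_lt (Or.inl hU0) (Or.inl hUt)).2 hx
  have main := pl_one_norm (f := fun x => (f x / A).toReal) (g := fun x => (g x / B).toReal)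
    (m := fun x => (min (m x / c) 1).toReal) (by fun_prop) (by fun_prop) (by fun_prop)
    (fun _ => ENNReal.toReal_nonneg) (fun _ => ENNReal.toReal_nonneg)
    (fun _ => ENNReal.toReal_nonneg)
    (fun x => by simpa using ENNReal.toReal_mono (by simp) (hfle x))
    (fun x => by simpa using ENNReal.toReal_mono (by simp) (hgle x))
    (exF f A hA hA0 hfb hft) (exF g B hB hB0 hgb hgt) (by
      intro a b
      rw [← ENNReal.toReal_mul, ← ENNReal.toReal_pow]
      refine ENNReal.toReal_mono (ENNReal.pow_ne_top (hmt _)) ?_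
      rcases min_choice (m ((a + b) / 2) / c) 1 with hh | hh
      · rw [hh, div_eq_mul_inv, div_eq_mul_inv, div_eq_mul_inv, mul_pow, ← ENNReal.inv_pow, hc,
          ENNReal.mul_inv (Or.inl hA0) (Or.inl hfb)]
        calc _ = (f a * g b) * (A⁻¹ * B⁻¹) := by ring
          _ ≤ _ := by gcongr; exact h a b
      · rw [hh]
        simpa using mul_le_mul' (hfle a) (hgle b))
  simp only [ENNReal.ofReal_toReal (hft _), ENNReal.ofReal_toReal (hgt _),
    ENNReal.ofReal_toReal (hmt _)] at main
  have main2 := ennreal_amgm main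
  have e1 : ∫⁻ x, f x = A * ∫⁻ x, f x / A := by
    rw [← lintegral_const_mul _ (by fun_prop)]
    simp_rw [ENNReal.mul_div_cancel hA0 hfb]
  have e2 : ∫⁻ x, g x = B * ∫⁻ x, g x / B := by
    rw [← lintegral_const_mul _ (by fun_prop)]
    simp_rw [ENNReal.mul_div_cancel hB0 hgb]
  have e3 : c * ∫⁻ x, min (m x / c) 1 ≤ ∫⁻ x, m x := by
    rw [← lintegral_const_mul _ (by fun_prop)]
    apply lintegral_mono
    intro x
    calc c * min (m x / c) 1 ≤ c * (m x / c) := by gcongr; exact min_le_left _ _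
      _ = m x := ENNReal.mul_div_cancel hc0 hct
  calc _ = (A * B) * ((∫⁻ x, f x / A) * ∫⁻ x, g x / B) := by rw [e1, e2]; ring
    _ ≤ c ^ 2 * (∫⁻ x, min (m x / c) 1) ^ 2 := by rw [hc]; gcongr
    _ = (c * ∫⁻ x, min (m x / c) 1) ^ 2 := by ring
    _ ≤ _ := by gcongr

lemma lintegral_trunc {f : ℝ → ℝ≥0∞} (hf : Measurable f) :
    ∫⁻ x, f x = ⨆ N : ℕ, ∫⁻ x, min (f x) N := by
  rw [← lintegral_iSup (by fun_prop)]
  · congr 1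
    ext x
    rw [← inf_iSup_eq, ENNReal.iSup_natCast]
    simp
  · intro i j hij x
    exact min_le_min le_rfl (by exact_mod_cast hij)

/-- one-dimensional Prekopa-Leindler -/
lemma pl_one {f g m : ℝ → ℝ≥0∞} (hf : Measurable f) (hg : Measurable g) (hm : Measurable m)
    (h : ∀ a b, f a * g b ≤ m ((a + b) / 2) ^ 2) :
    (∫⁻ x, f x) * (∫⁻ x, g x) ≤ (∫⁻ x, m x) ^ 2 := by
  rw [lintegral_trunc hf, lintegral_trunc hg]
  simp only [ENNReal.iSup_mul, ENNReal.mul_iSup, iSup_le_iff]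
  intro j i
  refine pl_one_bdd (by fun_prop) (by fun_prop) hm ?_ ?_ ?_
  · refine ne_top_of_le_ne_top (ENNReal.natCast_ne_top i) (iSup_le fun x => ?_)
    exact min_le_right (f x) _
  · refine ne_top_of_le_ne_top (ENNReal.natCast_ne_top j) (iSup_le fun x => ?_)
    exact min_le_right (g x) _
  · intro a b
    refine le_trans (mul_le_mul' (min_le_left _ _) (min_le_left _ _)) (h a b)

lemma piFinSuccAbove_symm_zero {k : ℕ} (p : ℝ × (Fin k → ℝ)) :
    (MeasurableEquiv.piFinSuccAbove (fun _ : Fin (k + 1) => ℝ) 0).symm p =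
      (Fin.cons p.1 p.2 : Fin (k + 1) → ℝ) := by
  simp [MeasurableEquiv.piFinSuccAbove, Fin.insertNthEquiv]

lemma lintegral_fin_succ {k : ℕ} {f : (Fin (k + 1) → ℝ) → ℝ≥0∞} (hf : Measurable f) :
    ∫⁻ x, f x = ∫⁻ s : ℝ, ∫⁻ y : Fin k → ℝ, f (Fin.cons s y) := by
  have := (volume_preserving_piFinSuccAbove (fun _ : Fin (k + 1) => ℝ) 0).symm
  rw [← this.lintegral_comp hf]
  rw [Measure.volume_eq_prod, lintegral_prod _ (by
    exact (hf.comp (MeasurableEquiv.measurable _)).aemeasurable)]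
  simp_rw [piFinSuccAbove_symm_zero]

/-- Prekopa-Leindler on `Fin k → ℝ` -/
lemma pl_pi (k : ℕ) : ∀ {f g m : (Fin k → ℝ) → ℝ≥0∞} (_ : Measurable f) (_ : Measurable g)
    (_ : Measurable m)
    (_ : ∀ a b, f a * g b ≤ m ((2⁻¹ : ℝ) • (a + b)) ^ 2),
    (∫⁻ x, f x) * (∫⁻ x, g x) ≤ (∫⁻ x, m x) ^ 2 := by
  induction k with
  | zero =>
    intro f g m hf hg hm h
    have := h default default
    rw [Subsingleton.elim ((2⁻¹ : ℝ) • (default + default : Fin 0 → ℝ)) default] at this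
    simp only [lintegral_unique]
    rw [Subsingleton.elim (@default (Fin 0 → ℝ) Pi.instInhabited) (@default (Fin 0 → ℝ) Unique.instInhabited)] at this
    simpa only [volume_pi, Measure.pi_univ, Finset.univ_eq_empty, Finset.prod_empty, mul_one] using this
  | succ k ih =>
    intro f g m hf hg hm h
    have hcons : Measurable (fun p : ℝ × (Fin k → ℝ) => (Fin.cons p.1 p.2 : Fin (k + 1) → ℝ)) := by
      simp_rw [← piFinSuccAbove_symm_zero]
      exact (MeasurableEquiv.piFinSuccAbove (fun _ : Fin (k + 1) => ℝ) 0).symm.measurable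
    have hcs : ∀ s : ℝ, Measurable (fun y : Fin k → ℝ => (Fin.cons s y : Fin (k + 1) → ℝ)) :=
      fun s => hcons.comp (measurable_const.prodMk measurable_id)
    rw [lintegral_fin_succ hf, lintegral_fin_succ hg, lintegral_fin_succ hm]
    refine pl_one ?_ ?_ ?_ ?_
    · exact (hf.comp hcons).lintegral_prod_right'
    · exact (hg.comp hcons).lintegral_prod_right'
    · exact (hm.comp hcons).lintegral_prod_right'
    · intro s t
      refine ih (hf.comp (hcs s)) (hg.comp (hcs t)) (hm.comp (hcs _)) ?_
      intro a b
      convert h (Fin.cons s a) (Fin.cons t b) using 3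
      ext i
      refine Fin.cases ?_ (fun j => ?_) i
      · simp; ring
      · simp; ring

/-- Prekopa-Leindler on Euclidean space -/
lemma pl_eucl {k : ℕ} {f g m : EuclideanSpace ℝ (Fin k) → ℝ≥0∞} (hf : Measurable f)
    (hg : Measurable g) (hm : Measurable m)
    (h : ∀ a b, f a * g b ≤ m ((2⁻¹ : ℝ) • (a + b)) ^ 2) :
    (∫⁻ x, f x) * (∫⁻ x, g x) ≤ (∫⁻ x, m x) ^ 2 := by
  have hp := PiLp.volume_preserving_toLp (Fin k)
  rw [← hp.lintegral_comp hf, ← hp.lintegral_comp hg, ← hp.lintegral_comp hm]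
  refine pl_pi k (hf.comp hp.measurable) (hg.comp hp.measurable) (hm.comp hp.measurable) ?_
  intro a b
  exact h _ _

open scoped InnerProductSpace ENNReal Topology


/-- Abstract properties of the support function. -/
structure SupF {n : ℕ} (h : Eu n → ℝ) : Prop where
  hom : ∀ r : ℝ, 0 ≤ r → ∀ z, h (r • z) = r * h z
  sub : ∀ a b, h (a + b) ≤ h a + h b
  pos : ∀ z, z ≠ 0 → 0 < h z
  smooth : ContDiffOn ℝ (⊤ : ℕ∞) h {(0 : Eu n)}ᶜ
  posdef : ∀ x : Sph n, ∀ v : Eu n, v ≠ 0 →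
    0 < ⟪(fderiv ℝ (gradient h) (x : Eu n) + tens (x : Eu n)) v, v⟫_ℝ

namespace SupF
variable {n : ℕ} {h : Eu n → ℝ}

lemma contDiffAt (H : SupF h) {z : Eu n} (hz : z ≠ 0) : ContDiffAt ℝ (⊤ : ℕ∞) h z :=
  H.smooth.contDiffAt (isOpen_compl_singleton.mem_nhds hz)

lemma hasGradientAt (H : SupF h) {z : Eu n} (hz : z ≠ 0) :
    HasGradientAt h (gradient h z) z :=
  ((H.contDiffAt hz).differentiableAt (by simp)).hasGradientAt

lemma hasFDerivAt (H : SupF h) {z : Eu n} (hz : z ≠ 0) :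
    HasFDerivAt h (innerSL ℝ (gradient h z)) z := (H.hasGradientAt hz).hasFDerivAt

lemma grad_contDiffOn (H : SupF h) : ContDiffOn ℝ (⊤ : ℕ∞) (gradient h) {(0 : Eu n)}ᶜ := by
  have h1 : ContDiffOn ℝ (⊤ : ℕ∞) (fderiv ℝ h) {(0 : Eu n)}ᶜ :=
    H.smooth.fderiv_of_isOpen isOpen_compl_singleton (by simp)
  exact ((InnerProductSpace.toDual ℝ (Eu n)).symm.toContinuousLinearEquiv.contDiff.comp_contDiffOn h1)

lemma grad_contDiffAt (H : SupF h) {z : Eu n} (hz : z ≠ 0) :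
    ContDiffAt ℝ (⊤ : ℕ∞) (gradient h) z :=
  H.grad_contDiffOn.contDiffAt (isOpen_compl_singleton.mem_nhds hz)

lemma grad_hasFDerivAt (H : SupF h) {z : Eu n} (hz : z ≠ 0) :
    HasFDerivAt (gradient h) (fderiv ℝ (gradient h) z) z :=
  ((H.grad_contDiffAt hz).differentiableAt (by simp)).hasFDerivAt

lemma fderiv_grad_continuousOn (H : SupF h) :
    ContinuousOn (fderiv ℝ (gradient h)) {(0 : Eu n)}ᶜ :=
  H.grad_contDiffOn.continuousOn_fderiv_of_isOpen isOpen_compl_singleton (by simp)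

lemma h_zero (H : SupF h) : h 0 = 0 := by simpa using H.hom 0 le_rfl 0

lemma hasDerivAt_line (H : SupF h) {z : Eu n} (hz : z ≠ 0) (w : Eu n) :
    HasDerivAt (fun t : ℝ => h (z + t • w)) ⟪gradient h z, w⟫_ℝ 0 := by
  have h1 : HasDerivAt (fun t : ℝ => z + t • w) w 0 := by
    simpa using ((hasDerivAt_id (0 : ℝ)).smul_const w).const_add z
  have h2 : HasFDerivAt h (innerSL ℝ (gradient h z)) (z + (0 : ℝ) • w) := by
    simpa using H.hasFDerivAt hz
  exact h2.comp_hasDerivAt (0 : ℝ) h1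

lemma grad_le (H : SupF h) {z : Eu n} (hz : z ≠ 0) (w : Eu n) :
    ⟪gradient h z, w⟫_ℝ ≤ h w := by
  have h1 := (H.hasDerivAt_line hz w).tendsto_slope_zero_right
  refine le_of_tendsto h1 ?_
  filter_upwards [self_mem_nhdsWithin] with t ht
  have ht : 0 < t := ht
  have := H.sub z (t • w)
  rw [H.hom t ht.le] at this
  simp only [zero_add, zero_smul, add_zero, smul_eq_mul]
  rw [inv_mul_le_iff₀ ht]
  linarith

lemma grad_self (H : SupF h) {z : Eu n} (hz : z ≠ 0) : ⟪gradient h z, z⟫_ℝ = h z := by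
  have h1 := H.hasDerivAt_line hz z
  have h2 : HasDerivAt (fun t : ℝ => (1 + t) * h z) (h z) 0 := by
    simpa using ((hasDerivAt_id (0 : ℝ)).const_add 1).mul_const (h z)
  refine h1.unique (h2.congr_of_eventuallyEq ?_)
  filter_upwards [Ioi_mem_nhds (show (-1 : ℝ) < 0 by norm_num)] with t ht
  have ht : -1 < t := ht
  rw [← H.hom (1 + t) (by linarith), add_smul, one_smul]

lemma grad_unique (H : SupF h) {z p : Eu n} (hz : z ≠ 0) (hp : ∀ w, ⟪p, w⟫_ℝ ≤ h w)
    (hpz : ⟪p, z⟫_ℝ = h z) : p = gradient h z := by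
  have h1 : HasFDerivAt (fun w => h w - ⟪p, w⟫_ℝ) (innerSL ℝ (gradient h z) - innerSL ℝ p) z :=
    (H.hasFDerivAt hz).sub (innerSL ℝ p).hasFDerivAt
  have h2 : IsLocalMin (fun w => h w - ⟪p, w⟫_ℝ) z := by
    refine Filter.Eventually.of_forall fun w => ?_
    have := hp w
    simp only [hpz]; linarith
  have h3 := h2.hasFDerivAt_eq_zero h1
  rw [← map_sub] at h3
  have h4 := congrArg (fun L => L (gradient h z - p)) h3
  simp only [innerSL_apply_apply, _root_.zero_apply, inner_self_eq_zero] at h4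
  exact (sub_eq_zero.1 h4).symm

lemma grad_smul (H : SupF h) {z : Eu n} (hz : z ≠ 0) {r : ℝ} (hr : 0 < r) :
    gradient h (r • z) = gradient h z := by
  refine (H.grad_unique (smul_ne_zero hr.ne' hz) (H.grad_le hz) ?_).symm
  rw [inner_smul_right, H.grad_self hz, H.hom r hr.le]

lemma fderiv_grad_smul (H : SupF h) {z : Eu n} (hz : z ≠ 0) {r : ℝ} (hr : 0 < r) :
    r • fderiv ℝ (gradient h) (r • z) = fderiv ℝ (gradient h) z := by
  have h1 := H.grad_hasFDerivAt (smul_ne_zero hr.ne' hz)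
  have h2 : HasFDerivAt (fun w : Eu n => r • w) (r • ContinuousLinearMap.id ℝ (Eu n)) z :=
    (hasFDerivAt_id z).const_smul r
  have h3 := h1.comp z h2
  have h4 : (gradient h ∘ fun w : Eu n => r • w) =ᶠ[𝓝 z] gradient h := by
    filter_upwards [isOpen_compl_singleton.mem_nhds hz] with w hw
    exact H.grad_smul hw hr
  have h5 := (h3.congr_of_eventuallyEq h4.symm).unique (H.grad_hasFDerivAt hz)
  rw [← h5]
  ext v
  simp

lemma A_self (H : SupF h) {z : Eu n} (hz : z ≠ 0) : fderiv ℝ (gradient h) z z = 0 := by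
  have h1 : HasDerivAt (fun t : ℝ => z + t • z) z 0 := by
    simpa using ((hasDerivAt_id (0 : ℝ)).smul_const z).const_add z
  have h2 : HasFDerivAt (gradient h) (fderiv ℝ (gradient h) z) (z + (0 : ℝ) • z) := by
    simpa using H.grad_hasFDerivAt hz
  have h3 := h2.comp_hasDerivAt (0 : ℝ) h1
  refine h3.unique ((hasDerivAt_const (0 : ℝ) (gradient h z)).congr_of_eventuallyEq ?_)
  filter_upwards [Ioi_mem_nhds (show (-1 : ℝ) < 0 by norm_num)] with t ht
  have ht : -1 < t := ht
  have : z + t • z = (1 + t) • z := by rw [add_smul, one_smul]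
  simp only [Function.comp, this]
  exact H.grad_smul hz (by linarith)

lemma inner_A (H : SupF h) {z : Eu n} (hz : z ≠ 0) (v : Eu n) :
    ⟪fderiv ℝ (gradient h) z v, z⟫_ℝ = 0 := by
  have h1 := (H.grad_hasFDerivAt hz).inner ℝ (hasFDerivAt_id z)
  have h2 : (fun w => ⟪gradient h w, id w⟫_ℝ) =ᶠ[𝓝 z] h := by
    filter_upwards [isOpen_compl_singleton.mem_nhds hz] with w hw
    exact H.grad_self hw
  have h3 := (h1.congr_of_eventuallyEq h2.symm).unique (H.hasFDerivAt hz)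
  have h4 := congrArg (fun L => L v) h3
  simpa using h4

end SupF

/-- gradient of `h^2/2` -/
def GH {n : ℕ} (h : Eu n → ℝ) (z : Eu n) : Eu n := h z • gradient h z

/-- Hessian of `h^2/2` -/
def DH {n : ℕ} (h : Eu n → ℝ) (z : Eu n) : Eu n →L[ℝ] Eu n :=
  h z • fderiv ℝ (gradient h) z + tens (gradient h z)

namespace SupF
variable {n : ℕ} {h : Eu n → ℝ}

lemma GH_hasFDerivAt (H : SupF h) {z : Eu n} (hz : z ≠ 0) :
    HasFDerivAt (GH h) (DH h z) z :=
  (H.hasFDerivAt hz).smul (H.grad_hasFDerivAt hz)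

lemma DH_smul (H : SupF h) {z : Eu n} (hz : z ≠ 0) {r : ℝ} (hr : 0 < r) :
    DH h (r • z) = DH h z := by
  rw [DH, DH, H.grad_smul hz hr, ← H.fderiv_grad_smul hz hr, H.hom r hr.le, smul_smul, mul_comm]

lemma GH_smul (H : SupF h) {z : Eu n} (hz : z ≠ 0) {r : ℝ} (hr : 0 < r) :
    GH h (r • z) = r • GH h z := by
  rw [GH, GH, H.grad_smul hz hr, H.hom r hr.le, smul_smul]

lemma DH_continuousOn (H : SupF h) : ContinuousOn (DH h) {(0 : Eu n)}ᶜ := by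
  have h1 := H.grad_contDiffOn.continuousOn
  have h2 : ContinuousOn (fun z => tens (gradient h z)) {(0 : Eu n)}ᶜ := by
    have : Continuous (fun x : Eu n => tens x) := by
      unfold tens
      fun_prop
    exact this.comp_continuousOn h1
  exact (H.smooth.continuousOn.smul H.fderiv_grad_continuousOn).add h2

lemma GH_continuousOn (H : SupF h) : ContinuousOn (GH h) {(0 : Eu n)}ᶜ :=
  H.smooth.continuousOn.smul H.grad_contDiffOn.continuousOn

lemma bounds (H : SupF h) : ∃ m M : ℝ, 0 < m ∧ 0 < M ∧ ∀ z, m * ‖z‖ ≤ h z ∧ h z ≤ M * ‖z‖ := by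
  have hs : IsCompact (sphere (0 : Eu n) 1) := isCompact_sphere _ _
  have hc : ContinuousOn h (sphere (0 : Eu n) 1) :=
    H.smooth.continuousOn.mono fun x hx => by
      intro h0; simp at h0 hx; simp [h0] at hx
  have hne : (sphere (0 : Eu n) 1).Nonempty := (NormedSpace.sphere_nonempty).2 zero_le_one
  obtain ⟨a, ha, ha'⟩ := hs.exists_isMinOn hne hc
  obtain ⟨b, hb, hb'⟩ := hs.exists_isMaxOn hne hc
  have ne : ∀ x ∈ sphere (0 : Eu n) 1, x ≠ 0 := by
    rintro x hx rfl; simp at hx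
  refine ⟨h a, h b, H.pos a (ne a ha), H.pos b (ne b hb), fun z => ?_⟩
  by_cases hz : z = 0
  · simp [hz, H.h_zero]
  have hz' : 0 < ‖z‖ := norm_pos_iff.2 hz
  have hx : ‖z‖⁻¹ • z ∈ sphere (0 : Eu n) 1 := by
    simp [norm_smul, hz'.ne']
  have hz2 : h z = ‖z‖ * h (‖z‖⁻¹ • z) := by
    rw [H.hom _ (by positivity), ← mul_assoc, mul_inv_cancel₀ hz'.ne', one_mul]
  have h1 : h a ≤ h (‖z‖⁻¹ • z) := ha' hx
  have h2 : h (‖z‖⁻¹ • z) ≤ h b := hb' hx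
  rw [hz2]
  constructor <;> nlinarith

lemma grad_norm_le (H : SupF h) {M : ℝ} (hM : ∀ z, h z ≤ M * ‖z‖) {z : Eu n} (hz : z ≠ 0) :
    ‖gradient h z‖ ≤ M := by
  have h1 := (H.grad_le hz (gradient h z)).trans (hM _)
  rw [real_inner_self_eq_norm_sq] at h1
  have h2 := H.pos z hz
  rw [← H.grad_self hz] at h2
  have : gradient h z ≠ 0 := by
    intro h0; simp [h0] at h2
  have := norm_pos_iff.2 this
  nlinarith

lemma abs_sub_le (H : SupF h) {M : ℝ} (hM : ∀ z, h z ≤ M * ‖z‖) (a b : Eu n) :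
    |h a - h b| ≤ M * ‖a - b‖ := by
  have h1 := H.sub b (a - b)
  have h2 := H.sub a (b - a)
  have h3 := hM (a - b)
  have h4 := hM (b - a)
  rw [norm_sub_rev] at h4
  simp only [add_sub_cancel] at h1 h2
  rw [abs_le]
  constructor <;> linarith

lemma continuous (H : SupF h) : Continuous h := by
  obtain ⟨m, M, hm, hM, hb⟩ := H.bounds
  refine (LipschitzWith.of_dist_le_mul (K := M.toNNReal) fun a b => ?_).continuous
  rw [Real.dist_eq, dist_eq_norm, Real.coe_toNNReal _ hM.le]
  exact H.abs_sub_le (fun z => (hb z).2) a b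

lemma DH_bound (H : SupF h) : ∃ L : ℝ, 0 < L ∧ ∀ z, z ≠ 0 → ‖DH h z‖ ≤ L := by
  have hs : IsCompact (sphere (0 : Eu n) 1) := isCompact_sphere _ _
  have hc : ContinuousOn (DH h) (sphere (0 : Eu n) 1) :=
    H.DH_continuousOn.mono fun x hx => by
      intro h0; simp at h0 hx; simp [h0] at hx
  obtain ⟨C, hC⟩ := hs.exists_bound_of_continuousOn hc
  refine ⟨max C 1, by positivity, fun z hz => ?_⟩
  have hz' : 0 < ‖z‖ := norm_pos_iff.2 hz
  rw [← H.DH_smul hz (inv_pos.2 hz')]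
  refine (hC _ ?_).trans (le_max_left _ _)
  simp [norm_smul, hz'.ne']

end SupF

open scoped InnerProductSpace ENNReal Topology


namespace SupF
variable {n : ℕ} {h : Eu n → ℝ}

lemma sph_ne (x : Sph n) : (x : Eu n) ≠ 0 := by
  intro h0
  have := x.2
  rw [h0] at this
  simp at this

/-- `det (D²(h²/2)) = h^{n+2} det (A + x ⊗ x)` on the sphere -/
lemma det_DH (H : SupF h) (x : Sph n) :
    (DH h (x : Eu n)).det = h x ^ (n + 2) *
      LinearMap.det ((fderiv ℝ (gradient h) (x : Eu n) + tens (x : Eu n) : Eu n →L[ℝ] Eu n) :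
        Eu n →ₗ[ℝ] Eu n) := by
  have hx := sph_ne x
  have hx1 : ⟪(x : Eu n), (x : Eu n)⟫_ℝ = 1 := by
    rw [real_inner_self_eq_norm_sq]; have := x.2; simp
  have hpos := H.pos _ hx
  set y : Eu n := (x : Eu n) with hy
  set A := fderiv ℝ (gradient h) y with hA
  set X := gradient h y with hX
  have hXx : ⟪X, y⟫_ℝ = h y := H.grad_self hx
  let L : Eu n →ₗ[ℝ] Eu n :=
    LinearMap.transvection (innerSL ℝ y : Eu n →ₗ[ℝ] ℝ) ((h y)⁻¹ • X - y)
  let R : Eu n →ₗ[ℝ] Eu n :=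
    LinearMap.transvection (innerSL ℝ (X - y) : Eu n →ₗ[ℝ] ℝ) y
  have hfac : ((DH h y : Eu n →L[ℝ] Eu n) : Eu n →ₗ[ℝ] Eu n) =
      L ∘ₗ (h y • (((A + tens y : Eu n →L[ℝ] Eu n) : Eu n →ₗ[ℝ] Eu n) ∘ₗ R)) := by
    ext1 v
    have e1 : A y = 0 := H.A_self hx
    have e2 : ∀ v, ⟪y, A v⟫_ℝ = 0 := fun v => by rw [real_inner_comm]; exact H.inner_A hx v
    simp only [DH, tens, L, R, LinearMap.transvection.apply, LinearMap.comp_apply,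
      LinearMap.smul_apply, ContinuousLinearMap.coe_coe, _root_.add_apply,
      _root_.smul_apply, ContinuousLinearMap.smulRight_apply, innerSL_apply_apply,
      map_add, map_smul, e1, e2, hx1, inner_sub_left,
      inner_zero_right]
    rw [← hA, ← hX]
    have hne := hpos.ne'
    match_scalars <;> field_simp <;> ring
  have hLd : LinearMap.det L = 1 := by
    simp only [L, LinearMap.transvection.det, ContinuousLinearMap.coe_coe, innerSL_apply_apply,
      inner_sub_right, inner_smul_right, hx1]
    rw [real_inner_comm, hXx, inv_mul_cancel₀ hpos.ne']; ring
  have hRd : LinearMap.det R = h y := by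
    simp only [R, LinearMap.transvection.det, ContinuousLinearMap.coe_coe, innerSL_apply_apply,
      inner_sub_left, hx1, hXx]
    ring
  rw [ContinuousLinearMap.det, hfac, LinearMap.det_comp, LinearMap.det_smul, LinearMap.det_comp,
    hLd, hRd]
  simp only [finrank_euclideanSpace, Fintype.card_fin]
  ring

lemma det_pos_of_posdef (B : Eu n →L[ℝ] Eu n) (hB : ∀ v, v ≠ 0 → 0 < ⟪B v, v⟫_ℝ) :
    0 < LinearMap.det (B : Eu n →ₗ[ℝ] Eu n) := by
  let φ : ℝ → ℝ := fun t => ((1 - t) • ContinuousLinearMap.id ℝ (Eu n) + t • B).det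
  have hc : Continuous φ := by
    refine ContinuousLinearMap.continuous_det.comp ?_
    fun_prop
  have hne : ∀ t ∈ Set.Icc (0 : ℝ) 1, φ t ≠ 0 := by
    intro t ht h0
    have hb : ∃ v ≠ (0 : Eu n), ((1 - t) • ContinuousLinearMap.id ℝ (Eu n) + t • B) v = 0 := by
      by_contra hcon
      push Not at hcon
      have hinj : LinearMap.ker (((1 - t) • ContinuousLinearMap.id ℝ (Eu n) + t • B :
          Eu n →L[ℝ] Eu n) : Eu n →ₗ[ℝ] Eu n) = ⊥ := by
        rw [LinearMap.ker_eq_bot']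
        intro v hv
        by_contra hv0
        exact hcon v hv0 hv
      have := LinearMap.bot_lt_ker_of_det_eq_zero (f := (((1 - t) • ContinuousLinearMap.id ℝ (Eu n)
        + t • B : Eu n →L[ℝ] Eu n) : Eu n →ₗ[ℝ] Eu n)) h0
      rw [hinj] at this
      exact lt_irrefl _ this
    obtain ⟨v, hv, hv0⟩ := hb
    have h1 := congrArg (fun u => ⟪u, v⟫_ℝ) hv0
    simp only [_root_.add_apply, _root_.smul_apply,
      ContinuousLinearMap.id_apply, inner_add_left, inner_smul_left, inner_zero_left,
      real_inner_self_eq_norm_sq] at h1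
    simp at h1
    have h2 := hB v hv
    have h3 : 0 < ‖v‖ ^ 2 := by have := norm_pos_iff.2 hv; positivity
    rcases eq_or_lt_of_le ht.1 with h4 | h4
    · rw [← h4] at h1; simp at h1; exact hv h1
    · have := mul_pos h4 h2
      have := mul_nonneg (sub_nonneg.2 ht.2) h3.le
      linarith
  have h0 : φ 0 = 1 := by simp [φ, ContinuousLinearMap.det]
  have h1 : φ 1 = LinearMap.det (B : Eu n →ₗ[ℝ] Eu n) := by simp [φ, ContinuousLinearMap.det]
  rw [← h1]
  by_contra hcon
  push Not at hcon
  have := intermediate_value_Icc' (zero_le_one (α := ℝ)) hc.continuousOn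
  obtain ⟨t, ht, ht0⟩ := this ⟨hcon, by rw [h0]; norm_num⟩
  exact hne t ht ht0

lemma det_DH_pos_sph (H : SupF h) (x : Sph n) : 0 < (DH h (x : Eu n)).det := by
  rw [H.det_DH x]
  exact mul_pos (pow_pos (H.pos _ (sph_ne x)) _) (det_pos_of_posdef _ (H.posdef x))

lemma exists_sph {z : Eu n} (hz : z ≠ 0) : ∃ x : Sph n, z = ‖z‖ • (x : Eu n) := by
  have hz' : 0 < ‖z‖ := norm_pos_iff.2 hz
  refine ⟨⟨‖z‖⁻¹ • z, by simp [norm_smul, hz'.ne']⟩, ?_⟩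
  simp [smul_smul, hz'.ne']

lemma det_DH_pos (H : SupF h) {z : Eu n} (hz : z ≠ 0) : 0 < (DH h z).det := by
  obtain ⟨x, hx⟩ := exists_sph hz
  rw [hx, H.DH_smul (sph_ne x) (norm_pos_iff.2 hz)]
  exact H.det_DH_pos_sph x

lemma grad_inj (H : SupF h) {z w : Eu n} (hz : z ≠ 0) (hw : w ≠ 0)
    (he : gradient h z = gradient h w) (hh : h z = h w) : z = w := by
  set p := gradient h z with hp
  -- the gradient is constant near `z` on the segment
  have h1 : HasDerivAt (fun t : ℝ => z + t • (w - z)) (w - z) 0 := by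
    simpa using ((hasDerivAt_id (0 : ℝ)).smul_const (w - z)).const_add z
  have h2 : HasFDerivAt (gradient h) (fderiv ℝ (gradient h) z) (z + (0 : ℝ) • (w - z)) := by
    simpa using H.grad_hasFDerivAt hz
  have h3 := h2.comp_hasDerivAt (0 : ℝ) h1
  have hseg : ∀ t ∈ Set.Icc (0 : ℝ) 1, gradient h (z + t • (w - z)) = p := by
    intro t ht
    have e : z + t • (w - z) = (1 - t) • z + t • w := by module
    have ee : ⟪p, z + t • (w - z)⟫_ℝ = h z := by
      rw [e, inner_add_right, inner_smul_right, inner_smul_right, hp, H.grad_self hz, ← hp, he,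
        H.grad_self hw, hh]
      ring
    have hne : z + t • (w - z) ≠ 0 := by
      intro h0
      rw [h0] at ee
      have := H.pos z hz
      simp at ee
      linarith
    refine (H.grad_unique hne (H.grad_le hz) (le_antisymm (H.grad_le hz _) ?_)).symm
    rw [← hp, ee, e]
    refine (H.sub _ _).trans ?_
    rw [H.hom _ (by linarith [ht.2]), H.hom _ ht.1, ← hh]
    linarith
  have h4 : fderiv ℝ (gradient h) z (w - z) = 0 := by
    have hu := uniqueDiffOn_Icc (zero_lt_one (α := ℝ)) 0 (by simp)
    refine hu.eq_deriv _ h3.hasDerivWithinAt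
      ((hasDerivWithinAt_const (0 : ℝ) _ p).congr (fun t ht => ?_) ?_)
    · exact hseg t ht
    · exact hseg 0 (by simp)
  -- transfer to GH
  have h5 : DH h z (w - z) = 0 := by
    rw [DH]
    simp only [tens, _root_.add_apply, _root_.smul_apply, h4,
      ContinuousLinearMap.smulRight_apply, innerSL_apply_apply, smul_zero, zero_add]
    rw [inner_sub_right, H.grad_self hz, ← hp, he, H.grad_self hw, hh]
    simp
  have h6 : Function.Injective (DH h z : Eu n →ₗ[ℝ] Eu n) := by
    have hu : IsUnit (LinearMap.det (DH h z : Eu n →ₗ[ℝ] Eu n)) :=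
      (H.det_DH_pos hz).ne'.isUnit
    have := (LinearMap.equivOfIsUnitDet hu).injective
    intro a b hab
    exact this (by simpa using hab)
  have h7 : w - z = 0 := h6 (by simpa using h5)
  exact (sub_eq_zero.1 h7).symm

/-- the gauge function -/
def gg (h : Eu n → ℝ) (a : Eu n) : ℝ :=
  sSup ((fun x : Sph n => ⟪a, (x : Eu n)⟫_ℝ / h x) '' Set.univ)

lemma gg_fun_continuous (H : SupF h) :
    Continuous ↿(fun (a : Eu n) (x : Sph n) => ⟪a, (x : Eu n)⟫_ℝ / h x) := by
  have hc := H.continuous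
  refine Continuous.div (by fun_prop) (by fun_prop) fun p => (H.pos _ (sph_ne p.2)).ne'

lemma gg_continuous (H : SupF h) : Continuous (gg h) :=
  isCompact_univ.continuous_sSup H.gg_fun_continuous

lemma gg_exists (H : SupF h) (a : Eu n) : ∃ x : Sph n, gg h a = ⟪a, (x : Eu n)⟫_ℝ / h x := by
  have hc : Continuous (fun x : Sph n => ⟪a, (x : Eu n)⟫_ℝ / h x) :=
    H.gg_fun_continuous.comp (Continuous.prodMk continuous_const continuous_id)
  have hne : (Set.univ : Set (Sph n)).Nonempty :=
    ⟨⟨EuclideanSpace.single 0 1, by simp⟩, trivial⟩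
  obtain ⟨x, -, hx⟩ := isCompact_univ.exists_sSup_image_eq hne hc.continuousOn
  exact ⟨x, hx⟩

lemma le_gg (H : SupF h) (a : Eu n) (x : Sph n) : ⟪a, (x : Eu n)⟫_ℝ / h x ≤ gg h a := by
  have hc : Continuous (fun x : Sph n => ⟪a, (x : Eu n)⟫_ℝ / h x) :=
    H.gg_fun_continuous.comp (Continuous.prodMk continuous_const continuous_id)
  exact le_csSup (isCompact_univ.image hc).bddAbove ⟨x, trivial, rfl⟩

lemma inner_le (H : SupF h) (a z : Eu n) : ⟪a, z⟫_ℝ ≤ gg h a * h z := by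
  by_cases hz : z = 0
  · simp [hz, H.h_zero]
  obtain ⟨x, hx⟩ := exists_sph hz
  have h1 := H.le_gg a x
  rw [div_le_iff₀ (H.pos _ (sph_ne x))] at h1
  rw [hx, inner_smul_right, H.hom _ (norm_nonneg _)]
  have := norm_nonneg z
  nlinarith

lemma gg_GH (H : SupF h) {z : Eu n} (hz : z ≠ 0) : gg h (GH h z) = h z := by
  have hp := H.pos z hz
  apply le_antisymm
  · obtain ⟨x, hx⟩ := H.gg_exists (GH h z)
    rw [hx, div_le_iff₀ (H.pos _ (sph_ne x)), GH, real_inner_smul_left]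
    exact mul_le_mul_of_nonneg_left (H.grad_le hz _) hp.le
  · have h1 := H.inner_le (GH h z) z
    rw [GH, real_inner_smul_left, H.grad_self hz] at h1
    exact le_of_mul_le_mul_right h1 hp

lemma GH_ne (H : SupF h) {z : Eu n} (hz : z ≠ 0) : GH h z ≠ 0 := by
  intro h0
  have h1 : ⟪GH h z, z⟫_ℝ = h z * h z := by rw [GH, real_inner_smul_left, H.grad_self hz]
  have := H.pos z hz
  rw [h0] at h1
  simp at h1
  linarith

lemma GH_injOn (H : SupF h) : Set.InjOn (GH h) {(0 : Eu n)}ᶜ := by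
  intro z hz w hw he
  have hz : z ≠ 0 := hz
  have hw : w ≠ 0 := hw
  have hh : h z = h w := by rw [← H.gg_GH hz, ← H.gg_GH hw, he]
  refine H.grad_inj hz hw ?_ hh
  have := H.pos w hw
  rw [GH, GH, hh] at he
  exact smul_right_injective _ this.ne' he

lemma GH_image (H : SupF h) : GH h '' {(0 : Eu n)}ᶜ = {(0 : Eu n)}ᶜ := by
  ext a
  constructor
  · rintro ⟨z, hz, rfl⟩
    exact H.GH_ne hz
  · intro ha
    have ha : a ≠ 0 := ha
    obtain ⟨x, hx⟩ := H.gg_exists a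
    have hpx := H.pos _ (sph_ne x)
    have hg : 0 < gg h a := by
      have h1 := H.inner_le a a
      have h2 : 0 < ⟪a, a⟫_ℝ := by
        rw [real_inner_self_eq_norm_sq]; have := norm_pos_iff.2 ha; positivity
      have := H.pos a ha
      by_contra hc
      push Not at hc
      nlinarith
    have hX : (gg h a)⁻¹ • a = gradient h x := by
      refine H.grad_unique (sph_ne x) (fun w => ?_) ?_
      · rw [real_inner_smul_left, inv_mul_le_iff₀ hg]
        exact H.inner_le a w
      · rw [eq_div_iff hpx.ne'] at hx
        rw [real_inner_smul_left, ← hx, ← mul_assoc, inv_mul_cancel₀ hg.ne', one_mul]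
    have hr : 0 < gg h a / h x := by positivity
    refine ⟨(gg h a / h x) • (x : Eu n), smul_ne_zero hr.ne' (sph_ne x), ?_⟩
    rw [GH, H.grad_smul (sph_ne x) hr, H.hom _ hr.le, ← hX, div_mul_cancel₀ _ hpx.ne', smul_smul,
      mul_inv_cancel₀ hg.ne', one_smul]

lemma change_var (H : SupF h) (F : Eu n → ℝ≥0∞) :
    ∫⁻ a, F a = ∫⁻ z in {(0 : Eu n)}ᶜ, ENNReal.ofReal (DH h z).det * F (GH h z) := by
  have h1 := lintegral_image_eq_lintegral_abs_det_fderiv_mul (volume : Measure (Eu n))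
    (s := {(0 : Eu n)}ᶜ) (measurableSet_singleton _).compl
    (fun z hz => (H.GH_hasFDerivAt hz).hasFDerivWithinAt) H.GH_injOn F
  rw [H.GH_image, restrict_compl_singleton] at h1
  rw [h1, restrict_compl_singleton]
  apply lintegral_congr_ae
  have : ∀ᵐ z : Eu n, z ≠ 0 := by simp [ae_iff]
  filter_upwards [this] with z hz
  rw [abs_of_pos (H.det_DH_pos hz)]

end SupF

open scoped InnerProductSpace ENNReal Topology


/-- Gaussian moments on the half line -/
def cG (m : ℕ) : ℝ := ∫ r in Set.Ioi (0 : ℝ), r ^ m * exp (-(r ^ 2 / 2))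

lemma cG_eq (m : ℕ) : cG m = (1 / 2 : ℝ) ^ (-((m : ℝ) + 1) / 2) * (1 / 2) *
    Real.Gamma (((m : ℝ) + 1) / 2) := by
  have h := integral_rpow_mul_exp_neg_mul_rpow (p := 2) (q := (m : ℝ)) (b := 1 / 2) two_pos
    (by have : (0 : ℝ) ≤ m := m.cast_nonneg
        linarith) (by norm_num)
  rw [← h, cG]
  refine setIntegral_congr_fun measurableSet_Ioi fun r hr => ?_
  simp only [rpow_natCast]
  congr 2
  rw [rpow_two]
  ring

lemma cG_pos (m : ℕ) : 0 < cG m := by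
  rw [cG_eq]
  have : (0 : ℝ) ≤ m := m.cast_nonneg
  have := Real.Gamma_pos_of_pos (s := ((m : ℝ) + 1) / 2) (by positivity)
  positivity

lemma cG_rec (m : ℕ) : cG (m + 2) = ((m : ℝ) + 1) * cG m := by
  rw [cG_eq, cG_eq]
  have hm : (0 : ℝ) ≤ m := m.cast_nonneg
  have e1 : (((m + 2 : ℕ) : ℝ) + 1) / 2 = ((m : ℝ) + 1) / 2 + 1 := by push_cast; ring
  have e2 : -(((m + 2 : ℕ) : ℝ) + 1) / 2 = -((m : ℝ) + 1) / 2 + (-1) := by push_cast; ring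
  rw [e1, e2, Real.Gamma_add_one (by positivity), rpow_add (by norm_num), rpow_neg_one]
  ring

lemma gauss_integrable (m : ℕ) {b : ℝ} (hb : 0 < b) :
    IntegrableOn (fun r : ℝ => r ^ m * exp (-(b * r ^ 2))) (Set.Ioi 0) := by
  have := integrableOn_rpow_mul_exp_neg_mul_sq hb (s := m)
    (by have : (0 : ℝ) ≤ m := m.cast_nonneg
        linarith)
  simpa using this

lemma gauss_scale (m : ℕ) {a : ℝ} (ha : 0 < a) :
    ∫ r in Set.Ioi (0 : ℝ), r ^ m * exp (-((r * a) ^ 2 / 2)) = (a ^ (m + 1))⁻¹ * cG m := by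
  have h2 : ∫ r in Set.Ioi (0 : ℝ), (r * a) ^ m * exp (-((r * a) ^ 2 / 2)) =
      a ^ m * ∫ r in Set.Ioi (0 : ℝ), r ^ m * exp (-((r * a) ^ 2 / 2)) := by
    rw [← integral_const_mul]
    congr 1
    ext r
    ring
  have h3 : a ^ m * ∫ r in Set.Ioi (0 : ℝ), r ^ m * exp (-((r * a) ^ 2 / 2)) = a⁻¹ * cG m := by
    rw [← h2, cG]
    simpa using integral_comp_mul_right_Ioi (fun r => r ^ m * exp (-(r ^ 2 / 2))) 0 ha
  have ham : a ^ m ≠ 0 := (pow_pos ha m).ne'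
  generalize (∫ r in Set.Ioi (0 : ℝ), r ^ m * exp (-((r * a) ^ 2 / 2))) = I at h3 ⊢
  have h4 : I = (a ^ m)⁻¹ * (a⁻¹ * cG m) := by rw [← h3, inv_mul_cancel_left₀ ham]
  rw [h4, pow_succ, mul_inv, mul_assoc]

lemma eu_integrable_gauss (n k : ℕ) {b : ℝ} (hb : 0 < b) :
    Integrable (fun z : Eu n => ‖z‖ ^ k * exp (-(b * ‖z‖ ^ 2))) := by
  have h := integrable_fun_norm_addHaar (volume : Measure (Eu n))
    (f := fun r : ℝ => r ^ k * exp (-(b * r ^ 2)))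
  rw [h]
  have h2 := gauss_integrable (n + k) hb
  refine h2.congr (.of_forall fun r => ?_)
  simp [pow_add]
  ring

lemma polar_integral {n : ℕ} {F : Eu n → ℝ} (hF : Integrable F) :
    ∫ z, F z = ∫ x : Sph n, (∫ r in Set.Ioi (0 : ℝ), r ^ n * F (r • (x : Eu n))) ∂sphMeas n := by
  have hmp := (volume : Measure (Eu n)).measurePreserving_homeomorphUnitSphereProd
  have hdim : Module.finrank ℝ (Eu n) - 1 = n := by simp
  rw [hdim] at hmp
  set f : Sph n × Set.Ioi (0 : ℝ) → ℝ := fun p => F ((p.2 : ℝ) • (p.1 : Eu n)) with hf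
  have hcomp : ∀ z : ({(0 : Eu n)}ᶜ : Set (Eu n)), f (homeomorphUnitSphereProd (Eu n) z) = F z := by
    intro z
    have hz : ‖(z : Eu n)‖ ≠ 0 := norm_ne_zero_iff.2 z.2
    simp only [hf, homeomorphUnitSphereProd_apply_snd_coe, homeomorphUnitSphereProd_apply_fst_coe]
    rw [smul_smul, mul_inv_cancel₀ hz, one_smul]
  have hInt : Integrable f ((volume : Measure (Eu n)).toSphere.prod (Measure.volumeIoiPow n)) := by
    rw [← hmp.integrable_comp_emb (Homeomorph.measurableEmbedding _)]
    have : f ∘ homeomorphUnitSphereProd (Eu n) = F ∘ Subtype.val := funext hcomp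
    rw [this, ← integrableOn_iff_comap_subtypeVal (measurableSet_singleton _).compl]
    exact hF.integrableOn
  calc ∫ z, F z = ∫ z : ({(0 : Eu n)}ᶜ : Set (Eu n)), F z ∂((volume : Measure (Eu n)).comap
      (Subtype.val : ({(0 : Eu n)}ᶜ : Set (Eu n)) → Eu n)) := by
        rw [integral_subtype_comap (measurableSet_singleton _).compl F, restrict_compl_singleton]
    _ = ∫ p, f p ∂((volume : Measure (Eu n)).toSphere.prod (Measure.volumeIoiPow n)) := by
        rw [← hmp.integral_comp (Homeomorph.measurableEmbedding _) f]
        exact integral_congr_ae (.of_forall fun z => (hcomp z).symm)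
    _ = ∫ x : Sph n, ∫ r, f (x, r) ∂(Measure.volumeIoiPow n) ∂sphMeas n := integral_prod _ hInt
    _ = _ := by
      congr 1
      ext x
      simp only [Measure.volumeIoiPow, ENNReal.ofReal]
      rw [integral_withDensity_eq_integral_smul]
      · simp only [hf]
        rw [integral_subtype_comap measurableSet_Ioi
          (fun a : ℝ => Real.toNNReal (a ^ n) • F (a • (x : Eu n)))]
        refine setIntegral_congr_fun measurableSet_Ioi fun r hr => ?_
        have hr : 0 < r := hr
        simp only [NNReal.smul_def, Real.coe_toNNReal _ (pow_nonneg hr.le n), smul_eq_mul]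
      · exact (measurable_subtype_coe.pow_const _).real_toNNReal

namespace SupF
variable {n : ℕ} {h : Eu n → ℝ}

lemma hom_bound {q : Eu n → ℝ} {k : ℕ} (hq : ContinuousOn q {(0 : Eu n)}ᶜ)
    (hk : ∀ z, z ≠ 0 → ∀ r : ℝ, 0 < r → q (r • z) = r ^ k * q z) :
    ∃ C, 0 < C ∧ ∀ z, z ≠ 0 → |q z| ≤ C * ‖z‖ ^ k := by
  have hs : IsCompact (sphere (0 : Eu n) 1) := isCompact_sphere _ _
  have hc : ContinuousOn q (sphere (0 : Eu n) 1) :=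
    hq.mono fun x hx => by
      intro h0; simp at h0 hx; simp [h0] at hx
  obtain ⟨C, hC⟩ := hs.exists_bound_of_continuousOn hc
  refine ⟨max C 1, by positivity, fun z hz => ?_⟩
  obtain ⟨x, hx⟩ := exists_sph hz
  have h1 : |q x| ≤ max C 1 := (hC x x.2).trans (le_max_left _ _)
  have h2 : q z = ‖z‖ ^ k * q x := by
    conv_lhs => rw [hx]
    exact hk _ (sph_ne x) _ (norm_pos_iff.2 hz)
  rw [h2, abs_mul, abs_of_nonneg (by positivity), mul_comm]
  gcongr

lemma ae_ne_zero : ∀ᵐ z : Eu n, z ≠ 0 := by simp [ae_iff]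

lemma aesm {q : Eu n → ℝ} (hq : ContinuousOn q {(0 : Eu n)}ᶜ) :
    AEStronglyMeasurable q (volume : Measure (Eu n)) := by
  have := hq.aestronglyMeasurable (μ := (volume : Measure (Eu n)))
    (measurableSet_singleton (0 : Eu n)).compl
  rwa [restrict_compl_singleton] at this

lemma hom_integrable (H : SupF h) {q : Eu n → ℝ} {k : ℕ} (hq : ContinuousOn q {(0 : Eu n)}ᶜ)
    (hk : ∀ z, z ≠ 0 → ∀ r : ℝ, 0 < r → q (r • z) = r ^ k * q z) :
    Integrable (fun z => q z * exp (-(h z ^ 2 / 2))) := by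
  obtain ⟨C, hC, hb⟩ := hom_bound hq hk
  obtain ⟨m, M, hm, hM, hmM⟩ := H.bounds
  have hg := (eu_integrable_gauss n k (b := m ^ 2 / 2) (by positivity)).const_mul C
  refine hg.mono' ?_ ?_
  · have := H.continuous
    exact (aesm hq).mul (by fun_prop : Continuous _).aestronglyMeasurable
  · filter_upwards [ae_ne_zero] with z hz
    rw [norm_mul, Real.norm_eq_abs, Real.norm_eq_abs, abs_of_pos (exp_pos _), ← mul_assoc]
    refine mul_le_mul (hb z hz) ?_ (exp_pos _).le (by positivity)
    apply exp_le_exp.2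
    have h1 := (hmM z).1
    have h2 : (m * ‖z‖) ^ 2 ≤ h z ^ 2 := pow_le_pow_left₀ (by positivity) h1 2
    nlinarith

lemma hom_integral (H : SupF h) {q : Eu n → ℝ} {k : ℕ} (hq : ContinuousOn q {(0 : Eu n)}ᶜ)
    (hk : ∀ z, z ≠ 0 → ∀ r : ℝ, 0 < r → q (r • z) = r ^ k * q z) :
    ∫ z, q z * exp (-(h z ^ 2 / 2)) =
      cG (n + k) * ∫ x : Sph n, q x * (h x ^ (n + k + 1))⁻¹ ∂sphMeas n := by
  rw [polar_integral (H.hom_integrable hq hk), ← integral_const_mul]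
  congr 1
  ext x
  have h1 : ∫ r in Set.Ioi (0 : ℝ), r ^ n * (q (r • (x : Eu n)) * exp (-(h (r • (x : Eu n)) ^ 2 / 2)))
      = ∫ r in Set.Ioi (0 : ℝ), q x * (r ^ (n + k) * exp (-((r * h x) ^ 2 / 2))) := by
    refine setIntegral_congr_fun measurableSet_Ioi fun r hr => ?_
    have hr : 0 < r := hr
    simp only [hk _ (sph_ne x) r hr, H.hom r hr.le]
    ring
  rw [h1, integral_const_mul, gauss_scale _ (H.pos _ (sph_ne x))]
  ring

end SupF

open scoped InnerProductSpace ENNReal Topology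


lemma ofReal_integral_le {α : Type*} [MeasurableSpace α] {μ : Measure α} {G : α → ℝ}
    (hG : Integrable G μ) : ENNReal.ofReal (∫ x, G x ∂μ) ≤ ∫⁻ x, ENNReal.ofReal (G x) ∂μ := by
  apply ENNReal.ofReal_le_of_le_toReal
  rw [integral_eq_lintegral_pos_part_sub_lintegral_neg_part hG]
  have := ENNReal.toReal_nonneg (a := ∫⁻ a, ENNReal.ofReal (-G a) ∂μ)
  linarith

lemma exp_ge_cubic (x : ℝ) : 1 + x + x ^ 2 / 2 + x ^ 3 / 6 ≤ exp x := by
  have hmono : ∀ x : ℝ, HasDerivAt (fun x : ℝ => exp x - (1 + x + x ^ 2 / 2 + x ^ 3 / 6))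
      (exp x - (1 + x + x ^ 2 / 2)) x := by
    intro x
    have h1 : HasDerivAt (fun x : ℝ => 1 + x + x ^ 2 / 2 + x ^ 3 / 6) (1 + x + x ^ 2 / 2) x := by
      have := (((hasDerivAt_id x).const_add 1).add ((hasDerivAt_pow 2 x).div_const 2)).add
        ((hasDerivAt_pow 3 x).div_const 6)
      refine this.congr_deriv ?_
      norm_num
      ring
    exact (Real.hasDerivAt_exp x).sub h1
  rcases le_total 0 x with hx | hx
  · have := Real.sum_le_exp_of_nonneg hx 4
    simp [Finset.sum_range_succ, Nat.factorial] at this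
    linarith
  · have hq : ∀ y : ℝ, y ≤ 0 → exp y ≤ 1 + y + y ^ 2 / 2 := by
      intro y hy
      have h1 := Real.quadratic_le_exp_of_nonneg (x := -y) (by linarith)
      have h2 : exp y * exp (-y) = 1 := by rw [← exp_add]; simp
      have h3 : (0:ℝ) < 1 + y + y ^ 2 / 2 := by nlinarith [sq_nonneg (y + 1)]
      have h4 : 1 ≤ (1 + y + y ^ 2 / 2) * exp (-y) := by
        refine le_trans ?_ (mul_le_mul_of_nonneg_left h1 h3.le)
        nlinarith [sq_nonneg (y ^ 2)]
      have h5 := exp_pos y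
      have h6 := exp_pos (-y)
      nlinarith
    have hanti : AntitoneOn (fun x : ℝ => exp x - (1 + x + x ^ 2 / 2 + x ^ 3 / 6)) (Set.Iic 0) := by
      refine antitoneOn_of_deriv_nonpos (convex_Iic 0) (fun y _ => (hmono y).continuousAt.continuousWithinAt)
        (fun y _ => (hmono y).differentiableAt.differentiableWithinAt) fun y hy => ?_
      rw [(hmono y).deriv]
      have := hq y (Set.mem_Iic.1 (interior_subset hy))
      linarith
    have := hanti (Set.mem_Iic.2 hx) (Set.mem_Iic.2 le_rfl) hx
    simp at this
    linarith

lemma abs_exp_sub_one_le' (u : ℝ) : |exp u - 1| ≤ |u| * exp |u| := by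
  have h1 := add_one_le_exp u
  have h2 := add_one_le_exp (-u)
  have h3 : exp u * exp (-u) = 1 := by rw [← exp_add]; simp
  have h4 := exp_pos u
  have h5 : exp u - 1 ≤ u * exp u := by nlinarith
  have h6 : 1 ≤ exp |u| := one_le_exp (abs_nonneg u)
  have h7 : exp u ≤ exp |u| := exp_le_exp.2 (le_abs_self u)
  have h8 := abs_nonneg u
  rw [abs_le]
  constructor
  · nlinarith [neg_abs_le u]
  · refine h5.trans ?_
    exact mul_le_mul (le_abs_self u) h7 h4.le h8

lemma lim_arg {I0 I2 I3 J : ℝ} {Jt : ℝ → ℝ} (h0 : 0 < I0) (hJ : Filter.Tendsto Jt (𝓝[>] 0) (𝓝 J))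
    (hin : ∀ t : ℝ, 0 < t → 0 ≤ I0 + t ^ 2 * I2 / 2 + t ^ 3 * I3 / 6 →
      (I0 + t ^ 2 * I2 / 2 + t ^ 3 * I3 / 6) * (I0 + t ^ 2 * I2 / 2 - t ^ 3 * I3 / 6) ≤
        (I0 + t ^ 2 / 2 * Jt t) ^ 2) : I2 ≤ J := by
  have hid : Filter.Tendsto (fun t : ℝ => t) (𝓝[>] 0) (𝓝 0) :=
    tendsto_nhdsWithin_of_tendsto_nhds Filter.tendsto_id
  have hL : Filter.Tendsto (fun t : ℝ => I0 * I2 + t ^ 2 * I2 ^ 2 / 4 - t ^ 4 * I3 ^ 2 / 36)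
      (𝓝[>] 0) (𝓝 (I0 * I2)) := by
    have : Continuous (fun t : ℝ => I0 * I2 + t ^ 2 * I2 ^ 2 / 4 - t ^ 4 * I3 ^ 2 / 36) := by fun_prop
    have := (this.tendsto 0).comp hid
    simpa [Function.comp_def] using this
  have hR : Filter.Tendsto (fun t : ℝ => I0 * Jt t + t ^ 2 * Jt t ^ 2 / 4)
      (𝓝[>] 0) (𝓝 (I0 * J)) := by
    have := (hJ.const_mul I0).add (((hid.pow 2).mul (hJ.pow 2)).div_const 4)
    simpa using this
  have hP : Filter.Tendsto (fun t : ℝ => I0 + t ^ 2 * I2 / 2 + t ^ 3 * I3 / 6) (𝓝[>] 0) (𝓝 I0) := by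
    have : Continuous (fun t : ℝ => I0 + t ^ 2 * I2 / 2 + t ^ 3 * I3 / 6) := by fun_prop
    have := (this.tendsto 0).comp hid
    simpa [Function.comp_def] using this
  have hle : I0 * I2 ≤ I0 * J := by
    refine le_of_tendsto_of_tendsto hL hR ?_
    filter_upwards [self_mem_nhdsWithin, hP.eventually (lt_mem_nhds h0)] with t ht hpos
    have ht : 0 < t := ht
    have := hin t ht hpos.le
    have ht2 : 0 < t ^ 2 := by positivity
    refine le_of_mul_le_mul_left ?_ ht2
    nlinarith
  exact le_of_mul_le_mul_left hle h0

/-- The averaged perturbed function. -/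
def PP {n : ℕ} (h : Eu n → ℝ) (e : Eu n) (c t : ℝ) (z : Eu n) : ℝ :=
  ((h (z + t • e) - t * c) ^ 2 + (h (z - t • e) + t * c) ^ 2) / 4

/-- The degree one function -/
def ff {n : ℕ} (h : Eu n → ℝ) (e : Eu n) (c : ℝ) (z : Eu n) : ℝ := ⟪GH h z, e⟫_ℝ - c * h z

/-- The degree zero second order term -/
def QQ {n : ℕ} (h : Eu n → ℝ) (e : Eu n) (c : ℝ) (z : Eu n) : ℝ :=
  ⟪DH h z e, e⟫_ℝ - 2 * c * ⟪gradient h z, e⟫_ℝ + c ^ 2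

namespace SupF
variable {n : ℕ} {h : Eu n → ℝ}

lemma exponent_le (H : SupF h) (e : Eu n) (s c : ℝ) (a z : Eu n) :
    -(gg h a ^ 2 / 2) + s * (⟪a, e⟫_ℝ - c * gg h a) ≤
      (h (z + s • e) - s * c) ^ 2 / 2 - ⟪a, z⟫_ℝ := by
  have h1 := H.inner_le a (z + s • e)
  rw [inner_add_right, real_inner_smul_right] at h1
  nlinarith [sq_nonneg (gg h a + s * c - h (z + s • e))]

lemma pl_app (H : SupF h) (e : Eu n) (c t : ℝ) :
    (∫⁻ z in {(0 : Eu n)}ᶜ, ENNReal.ofReal (DH h z).det *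
      ENNReal.ofReal (exp (-(h z ^ 2 / 2) + t * ff h e c z))) *
    (∫⁻ z in {(0 : Eu n)}ᶜ, ENNReal.ofReal (DH h z).det *
      ENNReal.ofReal (exp (-(h z ^ 2 / 2) + (-t) * ff h e c z))) ≤
    (∫⁻ z in {(0 : Eu n)}ᶜ, ENNReal.ofReal (DH h z).det *
      ENNReal.ofReal (exp (PP h e c t z - h z ^ 2))) ^ 2 := by
  have hgc := H.gg_continuous
  have hhc := H.continuous
  let F : ℝ → Eu n → ℝ≥0∞ := fun s a =>
    ENNReal.ofReal (exp (-(gg h a ^ 2 / 2) + s * (⟪a, e⟫_ℝ - c * gg h a)))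
  let m : Eu n → ℝ≥0∞ := fun w => ⨅ z : Eu n, ENNReal.ofReal (exp (PP h e c t z - ⟪w, z⟫_ℝ))
  have hF : ∀ s, Measurable (F s) := fun s => by
    have : Continuous (F s) := by
      refine ENNReal.continuous_ofReal.comp ?_
      fun_prop
    exact this.measurable
  have hm : Measurable m := by
    refine UpperSemicontinuous.measurable (upperSemicontinuous_iInf fun z => Continuous.upperSemicontinuous ?_)
    refine ENNReal.continuous_ofReal.comp ?_
    fun_prop
  have hpl := pl_eucl (hF t) (hF (-t)) hm (by
    intro a b
    have hk : F t a * F (-t) b = ENNReal.ofReal (exp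
        (((-(gg h a ^ 2 / 2) + t * (⟪a, e⟫_ℝ - c * gg h a)) +
          (-(gg h b ^ 2 / 2) + (-t) * (⟪b, e⟫_ℝ - c * gg h b))) / 2)) ^ 2 := by
      simp only [F]
      rw [← ENNReal.ofReal_mul (exp_pos _).le, ← ENNReal.ofReal_pow (exp_pos _).le, ← exp_add,
        ← exp_nat_mul]
      congr 2
      push_cast
      ring
    rw [hk]
    gcongr
    refine le_iInf fun z => ENNReal.ofReal_le_ofReal (exp_le_exp.2 ?_)
    have h1 := H.exponent_le e t c a z
    have h2 := H.exponent_le e (-t) c b z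
    have h3 : z + (-t) • e = z - t • e := by rw [neg_smul, sub_eq_add_neg]
    rw [h3] at h2
    rw [PP, real_inner_smul_left, inner_add_left]
    nlinarith)
  have hFs : ∀ s, ∫⁻ a, F s a = ∫⁻ z in {(0 : Eu n)}ᶜ, ENNReal.ofReal (DH h z).det *
      ENNReal.ofReal (exp (-(h z ^ 2 / 2) + s * ff h e c z)) := by
    intro s
    rw [H.change_var]
    refine setLIntegral_congr_fun (measurableSet_singleton _).compl fun z hz => ?_
    simp only [F, ff]
    rw [H.gg_GH hz]
  rw [hFs, hFs] at hpl
  refine hpl.trans (pow_le_pow_left' ?_ 2)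
  rw [H.change_var]
  refine setLIntegral_mono' (measurableSet_singleton _).compl fun z hz => ?_
  gcongr
  refine (iInf_le _ z).trans (le_of_eq ?_)
  have : ⟪GH h z, z⟫_ℝ = h z ^ 2 := by
    rw [GH, real_inner_smul_left, H.grad_self hz]
    ring
  rw [this]

lemma D_continuousOn (H : SupF h) : ContinuousOn (fun z => (DH h z).det) {(0 : Eu n)}ᶜ :=
  ContinuousLinearMap.continuous_det.comp_continuousOn H.DH_continuousOn

lemma ff_continuousOn (H : SupF h) (e : Eu n) (c : ℝ) : ContinuousOn (ff h e c) {(0 : Eu n)}ᶜ :=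
  (H.GH_continuousOn.inner continuousOn_const).sub (H.continuous.continuousOn.const_mul c |>.congr
    fun _ _ => rfl)

lemma QQ_continuousOn (H : SupF h) (e : Eu n) (c : ℝ) : ContinuousOn (QQ h e c) {(0 : Eu n)}ᶜ := by
  have h1 : ContinuousOn (fun z => ⟪DH h z e, e⟫_ℝ) {(0 : Eu n)}ᶜ :=
    (H.DH_continuousOn.clm_apply continuousOn_const).inner continuousOn_const
  have h2 : ContinuousOn (fun z => ⟪gradient h z, e⟫_ℝ) {(0 : Eu n)}ᶜ :=
    H.grad_contDiffOn.continuousOn.inner continuousOn_const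
  exact (h1.sub (continuousOn_const.mul h2)).add continuousOn_const

lemma ff_smul (H : SupF h) (e : Eu n) (c : ℝ) {z : Eu n} (hz : z ≠ 0) {r : ℝ} (hr : 0 < r) :
    ff h e c (r • z) = r * ff h e c z := by
  rw [ff, ff, H.GH_smul hz hr, H.hom r hr.le, real_inner_smul_left]
  ring

lemma QQ_smul (H : SupF h) (e : Eu n) (c : ℝ) {z : Eu n} (hz : z ≠ 0) {r : ℝ} (hr : 0 < r) :
    QQ h e c (r • z) = QQ h e c z := by
  rw [QQ, QQ, H.DH_smul hz hr, H.grad_smul hz hr]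

lemma fD_cont (H : SupF h) (e : Eu n) (c : ℝ) (j : ℕ) :
    ContinuousOn (fun z => ff h e c z ^ j * (DH h z).det) {(0 : Eu n)}ᶜ :=
  ((H.ff_continuousOn e c).pow j).mul H.D_continuousOn

lemma fD_smul (H : SupF h) (e : Eu n) (c : ℝ) (j : ℕ) (z : Eu n) (hz : z ≠ 0) (r : ℝ) (hr : 0 < r) :
    ff h e c (r • z) ^ j * (DH h (r • z)).det = r ^ j * (ff h e c z ^ j * (DH h z).det) := by
  rw [H.ff_smul e c hz hr, H.DH_smul hz hr]
  ring

lemma QD_cont (H : SupF h) (e : Eu n) (c : ℝ) :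
    ContinuousOn (fun z => QQ h e c z * (DH h z).det) {(0 : Eu n)}ᶜ :=
  (H.QQ_continuousOn e c).mul H.D_continuousOn

lemma QD_smul (H : SupF h) (e : Eu n) (c : ℝ) (z : Eu n) (hz : z ≠ 0) (r : ℝ) (hr : 0 < r) :
    QQ h e c (r • z) * (DH h (r • z)).det = r ^ 0 * (QQ h e c z * (DH h z).det) := by
  rw [H.QQ_smul e c hz hr, H.DH_smul hz hr]
  ring

end SupF

open scoped InnerProductSpace ENNReal Topology


namespace SupF
variable {n : ℕ} {h : Eu n → ℝ}

lemma H_deriv (H : SupF h) {z e : Eu n} {s : ℝ} (hz : z + s • e ≠ 0) :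
    HasDerivAt (fun s : ℝ => h (z + s • e) ^ 2 / 2) ⟪GH h (z + s • e), e⟫_ℝ s := by
  have h1 : HasDerivAt (fun t : ℝ => z + t • e) e s := by
    simpa using ((hasDerivAt_id s).smul_const e).const_add z
  have h2 := (H.hasFDerivAt hz).comp_hasDerivAt s h1
  have h3 := (h2.pow 2).div_const 2
  refine h3.congr_deriv ?_
  simp [GH, real_inner_smul_left]
  ring

lemma H_deriv_neg (H : SupF h) {z e : Eu n} {s : ℝ} (hz : z - s • e ≠ 0) :
    HasDerivAt (fun s : ℝ => h (z - s • e) ^ 2 / 2) (-⟪GH h (z - s • e), e⟫_ℝ) s := by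
  have h0 : ∀ s : ℝ, z + s • (-e) = z - s • e := fun s => by rw [smul_neg, sub_eq_add_neg]
  have h1 := H.H_deriv (z := z) (e := -e) (s := s) (by rwa [h0])
  simp only [h0, inner_neg_right] at h1
  exact h1

/-- second symmetric difference -/
def psi (h : Eu n → ℝ) (z e : Eu n) (s : ℝ) : ℝ :=
  h (z + s • e) ^ 2 / 2 + h (z - s • e) ^ 2 / 2 - 2 * (h z ^ 2 / 2)

lemma psi_deriv (H : SupF h) {z e : Eu n} {s : ℝ} (hz : z + s • e ≠ 0) (hz' : z - s • e ≠ 0) :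
    HasDerivAt (psi h z e) (⟪GH h (z + s • e) - GH h (z - s • e), e⟫_ℝ) s := by
  have := ((H.H_deriv hz).add (H.H_deriv_neg hz')).sub_const (2 * (h z ^ 2 / 2))
  refine this.congr_deriv ?_
  rw [inner_sub_left]
  ring

lemma psi_bound (H : SupF h) {e : Eu n} (he : ‖e‖ = 1) :
    ∃ C, 0 < C ∧ ∀ z, ∀ t : ℝ, 0 < t → |psi h z e t| ≤ C * t ^ 2 := by
  obtain ⟨L, hL, hLb⟩ := H.DH_bound
  obtain ⟨m, M, hm, hM, hmM⟩ := H.bounds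
  refine ⟨2 * L + 4 * M ^ 2, by positivity, fun z t ht => ?_⟩
  rcases le_or_gt ‖z‖ t with hzt | hzt
  · have hnn : ∀ w, 0 ≤ h w := fun w => le_trans (by positivity) (hmM w).1
    have hte : ‖t • e‖ = t := by rw [norm_smul, he, mul_one, Real.norm_of_nonneg ht.le]
    have hp : h (z + t • e) ≤ 2 * M * t := by
      refine (hmM _).2.trans ?_
      have := norm_add_le z (t • e)
      nlinarith
    have hq : h (z - t • e) ≤ 2 * M * t := by
      refine (hmM _).2.trans ?_
      have := norm_sub_le z (t • e)
      nlinarith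
    have hr : h z ≤ M * t := by
      refine (hmM _).2.trans ?_
      gcongr
    have h1 := pow_le_pow_left₀ (hnn _) hp 2
    have h2 := pow_le_pow_left₀ (hnn _) hq 2
    have h3 := pow_le_pow_left₀ (hnn _) hr 2
    have hLt : 0 ≤ L * t ^ 2 := by positivity
    have hMt : 0 ≤ M ^ 2 * t ^ 2 := by positivity
    rw [psi, abs_le]
    constructor
    · nlinarith [sq_nonneg (h (z + t • e)), sq_nonneg (h (z - t • e))]
    · nlinarith [sq_nonneg (h z)]
  · have hball : ∀ w ∈ closedBall z t, w ≠ 0 := by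
      intro w hw h0
      rw [h0, mem_closedBall, dist_comm, dist_zero_right] at hw
      linarith
    have hmem : ∀ s ∈ Set.Icc (0 : ℝ) t, z + s • e ∈ closedBall z t ∧ z - s • e ∈ closedBall z t := by
      intro s hs
      constructor
      · simp [norm_smul, he, abs_of_nonneg hs.1, hs.2]
      · simp [mem_closedBall, norm_smul, he, abs_of_nonneg hs.1, hs.2]
    have hGH : ∀ s ∈ Set.Icc (0 : ℝ) t, ‖⟪GH h (z + s • e) - GH h (z - s • e), e⟫_ℝ‖ ≤ 2 * L * t := by
      intro s hs
      have h1 := (convex_closedBall z t).norm_image_sub_le_of_norm_hasFDerivWithin_le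
        (fun w hw => (H.GH_hasFDerivAt (hball w hw)).hasFDerivWithinAt)
        (fun w hw => hLb w (hball w hw)) (hmem s hs).2 (hmem s hs).1
      have h2 : z + s • e - (z - s • e) = (2 * s) • e := by rw [two_mul, add_smul]; abel
      rw [h2, norm_smul, he, mul_one, Real.norm_of_nonneg (by linarith [hs.1])] at h1
      refine (norm_inner_le_norm _ _).trans ?_
      rw [he, mul_one]
      refine h1.trans ?_
      nlinarith [hs.2]
    have h3 := norm_image_sub_le_of_norm_deriv_le_segment'
      (fun s hs => (H.psi_deriv (hball _ (hmem s hs).1) (hball _ (hmem s hs).2)).hasDerivWithinAt)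
      (fun s hs => hGH s ⟨hs.1, hs.2.le⟩) t ⟨ht.le, le_rfl⟩
    have h0 : psi h z e 0 = 0 := by simp [psi]; ring
    rw [h0, sub_zero, sub_zero, Real.norm_eq_abs] at h3
    refine h3.trans ?_
    have : 0 ≤ M ^ 2 * t ^ 2 := by positivity
    nlinarith

lemma PP_eq (h : Eu n → ℝ) (e : Eu n) (c t : ℝ) (z : Eu n) :
    PP h e c t z - h z ^ 2 / 2 = psi h z e t / 2 - t * c * (h (z + t • e) - h (z - t • e)) / 2
      + t ^ 2 * c ^ 2 / 2 := by
  rw [PP, psi]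
  ring

lemma PP_bound (H : SupF h) {e : Eu n} (he : ‖e‖ = 1) (c : ℝ) :
    ∃ C, 0 < C ∧ ∀ z, ∀ t : ℝ, 0 < t → |PP h e c t z - h z ^ 2 / 2| ≤ C * t ^ 2 := by
  obtain ⟨C, hC, hb⟩ := H.psi_bound he
  obtain ⟨m, M, hm, hM, hmM⟩ := H.bounds
  refine ⟨C + |c| * M + c ^ 2, by positivity, fun z t ht => ?_⟩
  have h1 := hb z t ht
  have h2 := H.abs_sub_le (fun z => (hmM z).2) (z + t • e) (z - t • e)
  have h3 : z + t • e - (z - t • e) = (2 * t) • e := by rw [two_mul, add_smul]; abel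
  rw [h3, norm_smul, he, mul_one, Real.norm_of_nonneg (by linarith)] at h2
  rw [PP_eq]
  have h4 : |t * c * (h (z + t • e) - h (z - t • e)) / 2| ≤ |c| * M * t ^ 2 := by
    rw [abs_div, abs_mul, abs_mul, abs_of_pos ht, abs_of_pos (two_pos : (0:ℝ) < 2)]
    have : t * |c| * |h (z + t • e) - h (z - t • e)| ≤ t * |c| * (M * (2 * t)) := by gcongr
    rw [div_le_iff₀ two_pos]
    refine this.trans (le_of_eq ?_)
    ring
  have h5 : 0 ≤ c ^ 2 * t ^ 2 := by positivity
  rw [abs_le] at h1 h4 ⊢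
  have h6 : 0 ≤ C * t ^ 2 := by positivity
  constructor <;> nlinarith

lemma psi_lim (H : SupF h) {z : Eu n} (hz : z ≠ 0) (e : Eu n) :
    Filter.Tendsto (fun t : ℝ => psi h z e t / t ^ 2) (𝓝[>] 0) (𝓝 ⟪DH h z e, e⟫_ℝ) := by
  have hc1 : Continuous (fun t : ℝ => z + t • e) := by fun_prop
  have hc2 : Continuous (fun t : ℝ => z - t • e) := by fun_prop
  have e1 : ∀ᶠ t : ℝ in 𝓝 0, z + t • e ≠ 0 :=
    hc1.continuousAt.eventually_ne (by simpa using hz)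
  have e2 : ∀ᶠ t : ℝ in 𝓝 0, z - t • e ≠ 0 :=
    hc2.continuousAt.eventually_ne (by simpa using hz)
  have hd1 : HasDerivAt (fun t : ℝ => z + t • e) e 0 := by
    simpa using ((hasDerivAt_id (0 : ℝ)).smul_const e).const_add z
  have hd2 : HasDerivAt (fun t : ℝ => z - t • e) (-e) 0 := by
    simpa using ((hasDerivAt_id (0 : ℝ)).smul_const e).const_sub z
  have hG1 : HasDerivAt (fun t : ℝ => GH h (z + t • e)) (DH h z e) 0 := by
    have : HasFDerivAt (GH h) (DH h z) (z + (0 : ℝ) • e) := by simpa using H.GH_hasFDerivAt hz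
    exact this.comp_hasDerivAt 0 hd1
  have hG2 : HasDerivAt (fun t : ℝ => GH h (z - t • e)) (-(DH h z e)) 0 := by
    have : HasFDerivAt (GH h) (DH h z) (z - (0 : ℝ) • e) := by simpa using H.GH_hasFDerivAt hz
    have h5 := this.comp_hasDerivAt 0 hd2
    rw [map_neg] at h5
    exact h5
  have hd := ((hG1.sub hG2).inner ℝ (hasDerivAt_const (0 : ℝ) e)).tendsto_slope_zero_right
  refine HasDerivAt.lhopital_zero_nhdsGT (f := psi h z e) (g := fun t => t ^ 2)
    (f' := fun t => ⟪GH h (z + t • e) - GH h (z - t • e), e⟫_ℝ) (g' := fun t => 2 * t) ?_ ?_ ?_ ?_ ?_ ?_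
  · filter_upwards [nhdsWithin_le_nhds e1, nhdsWithin_le_nhds e2] with t h1 h2
    exact H.psi_deriv h1 h2
  · filter_upwards with t
    simpa using hasDerivAt_pow 2 t
  · filter_upwards [self_mem_nhdsWithin] with t ht
    have ht : 0 < t := ht
    positivity
  · have hcont : Continuous (psi h z e) := by
      have := H.continuous
      unfold psi
      fun_prop
    have h0 : psi h z e 0 = 0 := by simp [psi]; ring
    have := hcont.tendsto 0
    rw [h0] at this
    exact this.mono_left nhdsWithin_le_nhds
  · have : Continuous (fun t : ℝ => t ^ 2) := by fun_prop
    have := this.tendsto 0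
    simp only [ne_eq, OfNat.ofNat_ne_zero, not_false_eq_true, zero_pow] at this
    exact this.mono_left nhdsWithin_le_nhds
  · have h2 := hd.div_const 2
    simp only [Pi.sub_apply, zero_add, zero_smul, add_zero, sub_zero, sub_self, inner_zero_left, inner_zero_right,
      smul_eq_mul, sub_neg_eq_add] at h2
    have h3 : (⟪DH h z e + DH h z e, e⟫_ℝ) / 2 = ⟪DH h z e, e⟫_ℝ := by
      rw [inner_add_left]; ring
    rw [h3] at h2
    refine h2.congr fun t => ?_
    rw [div_eq_mul_inv, div_eq_mul_inv, mul_inv]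
    ring

lemma PP_lim (H : SupF h) {z : Eu n} (hz : z ≠ 0) (e : Eu n) (c : ℝ) :
    Filter.Tendsto (fun t : ℝ => 2 / t ^ 2 * (PP h e c t z - h z ^ 2 / 2)) (𝓝[>] 0)
      (𝓝 (QQ h e c z)) := by
  have h1 := H.psi_lim hz e
  have h2 := (H.hasDerivAt_line hz e).tendsto_slope_zero_right
  have h3 := (H.hasDerivAt_line hz (-e)).tendsto_slope_zero_right
  have h4 := (h1.sub ((h2.sub h3).const_mul c)).add_const (c ^ 2)
  have h5 : ⟪DH h z e, e⟫_ℝ - c * (⟪gradient h z, e⟫_ℝ - ⟪gradient h z, -e⟫_ℝ) + c ^ 2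
      = QQ h e c z := by
    rw [QQ, inner_neg_right]; ring
  rw [h5] at h4
  refine h4.congr' ?_
  filter_upwards [self_mem_nhdsWithin] with t ht
  have ht : t ≠ 0 := (show (0:ℝ) < t from ht).ne'
  rw [PP_eq]
  simp only [zero_add, smul_neg, smul_eq_mul, zero_smul, neg_zero, add_zero, ← sub_eq_add_neg]
  field_simp
  ring

lemma exp_lim (H : SupF h) {z : Eu n} (hz : z ≠ 0) {e : Eu n} (he : ‖e‖ = 1) (c : ℝ) :
    Filter.Tendsto (fun t : ℝ => 2 / t ^ 2 * (exp (PP h e c t z - h z ^ 2 / 2) - 1)) (𝓝[>] 0)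
      (𝓝 (QQ h e c z)) := by
  obtain ⟨C, hC, hb⟩ := H.PP_bound he c
  have h1 := H.PP_lim hz e c
  have hid : Filter.Tendsto (fun t : ℝ => t) (𝓝[>] 0) (𝓝 0) :=
    tendsto_nhdsWithin_of_tendsto_nhds Filter.tendsto_id
  have hsm : Filter.Tendsto (fun t : ℝ => 2 * C ^ 2 * t ^ 2) (𝓝[>] 0) (𝓝 0) := by
    simpa using (hid.pow 2).const_mul (2 * C ^ 2)
  have hsm2 : Filter.Tendsto (fun t : ℝ => C * t ^ 2) (𝓝[>] 0) (𝓝 0) := by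
    simpa using (hid.pow 2).const_mul C
  have h2 : Filter.Tendsto (fun t : ℝ => 2 / t ^ 2 * (exp (PP h e c t z - h z ^ 2 / 2) - 1) -
      2 / t ^ 2 * (PP h e c t z - h z ^ 2 / 2)) (𝓝[>] 0) (𝓝 0) := by
    refine squeeze_zero_norm' ?_ hsm
    filter_upwards [self_mem_nhdsWithin, hsm2.eventually (gt_mem_nhds one_pos)] with t ht hlt
    have ht : 0 < t := ht
    have hu := hb z t ht
    set u := PP h e c t z - h z ^ 2 / 2
    have h3 := Real.abs_exp_sub_one_sub_id_le (x := u) (hu.trans hlt.le)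
    rw [← mul_sub, Real.norm_eq_abs, abs_mul, abs_of_pos (by positivity : 0 < 2 / t ^ 2)]
    have h4 : u ^ 2 ≤ (C * t ^ 2) ^ 2 := by
      rw [← sq_abs]
      exact pow_le_pow_left₀ (abs_nonneg _) hu 2
    calc 2 / t ^ 2 * |exp u - 1 - u| ≤ 2 / t ^ 2 * (C * t ^ 2) ^ 2 := by
          gcongr
          exact h3.trans h4
      _ = _ := by field_simp
  simpa using h2.add h1

/-- The dominated convergence step. -/
lemma Jt_lim (H : SupF h) {e : Eu n} (he : ‖e‖ = 1) (c : ℝ) :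
    Filter.Tendsto (fun t : ℝ => ∫ z, (DH h z).det * exp (-(h z ^ 2 / 2)) *
        (2 / t ^ 2 * (exp (PP h e c t z - h z ^ 2 / 2) - 1))) (𝓝[>] 0)
      (𝓝 (∫ z, QQ h e c z * (DH h z).det * exp (-(h z ^ 2 / 2)))) := by
  obtain ⟨C, hC, hb⟩ := H.PP_bound he c
  have hW := H.hom_integrable (H.fD_cont e c 0) (H.fD_smul e c 0)
  simp only [pow_zero, one_mul] at hW
  have hcont := H.continuous
  refine tendsto_integral_filter_of_dominated_convergence
    (fun z => 2 * C * exp C * ((DH h z).det * exp (-(h z ^ 2 / 2)))) ?_ ?_ (hW.const_mul _) ?_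
  · refine .of_forall fun t => ?_
    refine hW.aestronglyMeasurable.mul (Continuous.aestronglyMeasurable ?_)
    unfold PP
    fun_prop
  · have hlt : ∀ᶠ t : ℝ in 𝓝[>] 0, t < 1 := nhdsWithin_le_nhds (gt_mem_nhds one_pos)
    filter_upwards [self_mem_nhdsWithin, hlt] with t ht ht1
    have ht : 0 < t := ht
    filter_upwards [ae_ne_zero] with z hz
    have hD := H.det_DH_pos hz
    have hu := hb z t ht
    set u := PP h e c t z - h z ^ 2 / 2
    have h1 := abs_exp_sub_one_le' u
    have ht2 : t ^ 2 ≤ 1 := by nlinarith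
    have h2 : exp |u| ≤ exp C := exp_le_exp.2 (hu.trans (by nlinarith))
    rw [norm_mul, Real.norm_of_nonneg (by positivity), Real.norm_eq_abs, abs_mul,
      abs_of_pos (by positivity : 0 < 2 / t ^ 2), mul_comm]
    refine mul_le_mul_of_nonneg_right ?_ (by positivity)
    calc 2 / t ^ 2 * |exp u - 1| ≤ 2 / t ^ 2 * ((C * t ^ 2) * exp C) := by
          gcongr
          exact h1.trans (mul_le_mul hu h2 (exp_pos _).le (by positivity))
      _ = 2 * C * exp C := by field_simp
  · filter_upwards [ae_ne_zero] with z hz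
    have := (H.exp_lim hz he c).const_mul ((DH h z).det * exp (-(h z ^ 2 / 2)))
    have h6 : (DH h z).det * exp (-(h z ^ 2 / 2)) * QQ h e c z =
        QQ h e c z * (DH h z).det * exp (-(h z ^ 2 / 2)) := by ring
    rwa [h6] at this

end SupF

open scoped InnerProductSpace ENNReal Topology


namespace SupF
variable {n : ℕ} {h : Eu n → ℝ}

lemma Rt_eq (H : SupF h) {e : Eu n} (he : ‖e‖ = 1) (c : ℝ) {t : ℝ} (ht : 0 < t) :
    (∫⁻ z in {(0 : Eu n)}ᶜ, ENNReal.ofReal (DH h z).det *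
      ENNReal.ofReal (exp (PP h e c t z - h z ^ 2))) = ENNReal.ofReal
      ((∫ z, (DH h z).det * exp (-(h z ^ 2 / 2))) + t ^ 2 / 2 *
        ∫ z, (DH h z).det * exp (-(h z ^ 2 / 2)) *
        (2 / t ^ 2 * (exp (PP h e c t z - h z ^ 2 / 2) - 1))) ∧
    0 ≤ ((∫ z, (DH h z).det * exp (-(h z ^ 2 / 2))) + t ^ 2 / 2 *
        ∫ z, (DH h z).det * exp (-(h z ^ 2 / 2)) *
        (2 / t ^ 2 * (exp (PP h e c t z - h z ^ 2 / 2) - 1))) := by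
  obtain ⟨C, hC, hb⟩ := H.PP_bound he c
  have hW := H.hom_integrable (H.fD_cont e c 0) (H.fD_smul e c 0)
  simp only [pow_zero, one_mul] at hW
  have hcont := H.continuous
  have hInt : Integrable (fun z => (DH h z).det * exp (-(h z ^ 2 / 2)) *
      exp (PP h e c t z - h z ^ 2 / 2)) := by
    refine (hW.const_mul (exp (C * t ^ 2))).mono' ?_ ?_
    · refine hW.aestronglyMeasurable.mul (Continuous.aestronglyMeasurable ?_)
      unfold PP
      fun_prop
    · filter_upwards [ae_ne_zero] with z hz
      have hD := H.det_DH_pos hz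
      rw [norm_mul, Real.norm_of_nonneg (by positivity), Real.norm_of_nonneg (exp_pos _).le, mul_comm]
      refine mul_le_mul_of_nonneg_right ?_ (by positivity)
      exact exp_le_exp.2 ((le_abs_self _).trans (hb z t ht))
  have heq : (∫ z, (DH h z).det * exp (-(h z ^ 2 / 2))) + t ^ 2 / 2 *
        ∫ z, (DH h z).det * exp (-(h z ^ 2 / 2)) *
        (2 / t ^ 2 * (exp (PP h e c t z - h z ^ 2 / 2) - 1)) =
      ∫ z, (DH h z).det * exp (-(h z ^ 2 / 2)) * exp (PP h e c t z - h z ^ 2 / 2) := by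
    rw [← integral_const_mul]
    have h1 : (fun z => t ^ 2 / 2 * ((DH h z).det * exp (-(h z ^ 2 / 2)) *
        (2 / t ^ 2 * (exp (PP h e c t z - h z ^ 2 / 2) - 1)))) = fun z =>
        (DH h z).det * exp (-(h z ^ 2 / 2)) * exp (PP h e c t z - h z ^ 2 / 2) -
        (DH h z).det * exp (-(h z ^ 2 / 2)) := by
      ext z
      field_simp
    rw [h1, integral_sub hInt hW]
    ring
  rw [heq]
  have hnn : 0 ≤ᵐ[volume] fun z => (DH h z).det * exp (-(h z ^ 2 / 2)) *
      exp (PP h e c t z - h z ^ 2 / 2) := by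
    filter_upwards [ae_ne_zero] with z hz
    have hD := H.det_DH_pos hz
    simp only [Pi.zero_apply]
    positivity
  refine ⟨?_, integral_nonneg_of_ae hnn⟩
  rw [ofReal_integral_eq_lintegral_ofReal hInt hnn, restrict_compl_singleton]
  refine lintegral_congr_ae ?_
  filter_upwards [ae_ne_zero] with z hz
  have hD := H.det_DH_pos hz
  rw [← ENNReal.ofReal_mul hD.le, mul_assoc, ← exp_add]
  congr 3
  ring

lemma Lt_le (H : SupF h) (e : Eu n) (c t : ℝ)
    (hI1 : ∫ z, ff h e c z ^ 1 * (DH h z).det * exp (-(h z ^ 2 / 2)) = 0) :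
    ENNReal.ofReal ((∫ z, (DH h z).det * exp (-(h z ^ 2 / 2))) +
      t ^ 2 * (∫ z, ff h e c z ^ 2 * (DH h z).det * exp (-(h z ^ 2 / 2))) / 2 +
      t ^ 3 * (∫ z, ff h e c z ^ 3 * (DH h z).det * exp (-(h z ^ 2 / 2))) / 6) ≤
    ∫⁻ z in {(0 : Eu n)}ᶜ, ENNReal.ofReal (DH h z).det *
      ENNReal.ofReal (exp (-(h z ^ 2 / 2) + t * ff h e c z)) := by
  have hW := fun j => H.hom_integrable (H.fD_cont e c j) (H.fD_smul e c j)
  have hW0 := hW 0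
  simp only [pow_zero, one_mul] at hW0
  have h1 : Integrable (fun z => (DH h z).det * exp (-(h z ^ 2 / 2)) +
      t * (ff h e c z ^ 1 * (DH h z).det * exp (-(h z ^ 2 / 2))) +
      t ^ 2 / 2 * (ff h e c z ^ 2 * (DH h z).det * exp (-(h z ^ 2 / 2))) +
      t ^ 3 / 6 * (ff h e c z ^ 3 * (DH h z).det * exp (-(h z ^ 2 / 2)))) :=
    ((hW0.add ((hW 1).const_mul _)).add ((hW 2).const_mul _)).add ((hW 3).const_mul _)
  have a1 : Integrable (fun z => (DH h z).det * exp (-(h z ^ 2 / 2)) +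
      t * (ff h e c z ^ 1 * (DH h z).det * exp (-(h z ^ 2 / 2)))) := hW0.add ((hW 1).const_mul _)
  have a2 : Integrable (fun z => (DH h z).det * exp (-(h z ^ 2 / 2)) +
      t * (ff h e c z ^ 1 * (DH h z).det * exp (-(h z ^ 2 / 2))) +
      t ^ 2 / 2 * (ff h e c z ^ 2 * (DH h z).det * exp (-(h z ^ 2 / 2)))) :=
    a1.add ((hW 2).const_mul _)
  have h2 := ofReal_integral_le h1
  rw [integral_add a2 ((hW 3).const_mul _),
    integral_add a1 ((hW 2).const_mul _),
    integral_add hW0 ((hW 1).const_mul _), integral_const_mul, integral_const_mul,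
    integral_const_mul, hI1] at h2
  refine le_trans (le_of_eq ?_) (h2.trans ?_)
  · congr 1
    ring
  · rw [restrict_compl_singleton]
    refine lintegral_mono_ae ?_
    filter_upwards [ae_ne_zero] with z hz
    have hD := H.det_DH_pos hz
    rw [← ENNReal.ofReal_mul hD.le, exp_add]
    refine ENNReal.ofReal_le_ofReal ?_
    have h3 := mul_le_mul_of_nonneg_left (exp_ge_cubic (t * ff h e c z))
      (by positivity : 0 ≤ (DH h z).det * exp (-(h z ^ 2 / 2)))
    refine le_trans (le_of_eq ?_) (h3.trans (le_of_eq ?_)) <;> ring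

lemma I0_pos (H : SupF h) : 0 < ∫ z, (DH h z).det * exp (-(h z ^ 2 / 2)) := by
  have hW := H.hom_integrable (H.fD_cont 0 0 0) (H.fD_smul 0 0 0)
  simp only [pow_zero, one_mul] at hW
  have hpos : ∀ᵐ z, 0 < (DH h z).det * exp (-(h z ^ 2 / 2)) := by
    filter_upwards [ae_ne_zero] with z hz
    have hD := H.det_DH_pos hz
    positivity
  rw [integral_pos_iff_support_of_nonneg_ae (hpos.mono fun z hz => hz.le) hW]
  have : Function.support (fun z => (DH h z).det * exp (-(h z ^ 2 / 2))) =ᵐ[volume] Set.univ := by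
    filter_upwards [hpos] with z hz
    exact eq_true hz.ne'
  rw [measure_congr this]
  simp

lemma gauss_ineq (H : SupF h) {e : Eu n} (he : ‖e‖ = 1) (c : ℝ)
    (hI1 : ∫ z, ff h e c z ^ 1 * (DH h z).det * exp (-(h z ^ 2 / 2)) = 0) :
    ∫ z, ff h e c z ^ 2 * (DH h z).det * exp (-(h z ^ 2 / 2)) ≤
      ∫ z, QQ h e c z * (DH h z).det * exp (-(h z ^ 2 / 2)) := by
  refine lim_arg (I3 := ∫ z, ff h e c z ^ 3 * (DH h z).det * exp (-(h z ^ 2 / 2)))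
    H.I0_pos (H.Jt_lim he c) fun t ht hL => ?_
  obtain ⟨hR, hR0⟩ := H.Rt_eq he c ht
  have h1 := H.Lt_le e c t hI1
  have h2 := H.Lt_le e c (-t) hI1
  have h3 := (mul_le_mul' h1 h2).trans (H.pl_app e c t)
  rw [hR, ← ENNReal.ofReal_mul hL, ← ENNReal.ofReal_pow hR0] at h3
  have h4 := (ENNReal.ofReal_le_ofReal_iff (by positivity)).1 h3
  refine le_trans (le_of_eq ?_) h4
  ring

lemma sphere_ineq (H : SupF h) {e : Eu n} (he : ‖e‖ = 1) (c : ℝ)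
    (ρ : Sph n → ℝ) (hρ : ∀ x : Sph n, ρ x = h x *
      LinearMap.det ((fderiv ℝ (gradient h) (x : Eu n) + tens (x : Eu n) : Eu n →L[ℝ] Eu n) :
        Eu n →ₗ[ℝ] Eu n))
    (h1 : ∫ x : Sph n, (⟪gradient h x, e⟫_ℝ - c) * ρ x ∂sphMeas n = 0) :
    ((n : ℝ) + 1) * ∫ x : Sph n, (⟪gradient h x, e⟫_ℝ - c) ^ 2 * ρ x ∂sphMeas n ≤
      ∫ x : Sph n, (h x * ⟪fderiv ℝ (gradient h) (x : Eu n) e, e⟫_ℝ +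
        (⟪gradient h x, e⟫_ℝ - c) ^ 2) * ρ x ∂sphMeas n := by
  have hff : ∀ (j : ℕ) (x : Sph n), ff h e c x ^ j * (DH h (x : Eu n)).det * (h x ^ (n + j + 1))⁻¹ =
      (⟪gradient h x, e⟫_ℝ - c) ^ j * ρ x := by
    intro j x
    have hp := H.pos _ (sph_ne x)
    rw [H.det_DH, hρ, ff, GH, real_inner_smul_left, ← mul_comm (h x) c, ← mul_sub, mul_pow]
    field_simp
    ring
  have hQ : ∀ x : Sph n, QQ h e c x * (DH h (x : Eu n)).det * (h x ^ (n + 0 + 1))⁻¹ =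
      (h x * ⟪fderiv ℝ (gradient h) (x : Eu n) e, e⟫_ℝ +
        (⟪gradient h x, e⟫_ℝ - c) ^ 2) * ρ x := by
    intro x
    have hp := H.pos _ (sph_ne x)
    have hq : QQ h e c x = h x * ⟪fderiv ℝ (gradient h) (x : Eu n) e, e⟫_ℝ +
        (⟪gradient h x, e⟫_ℝ - c) ^ 2 := by
      rw [QQ, DH]
      simp only [_root_.add_apply, _root_.smul_apply, tens, ContinuousLinearMap.smulRight_apply,
        innerSL_apply_apply, inner_add_left, real_inner_smul_left]
      ring
    rw [H.det_DH, hρ, hq]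
    field_simp
    ring
  have p : ∀ j, ∫ z, ff h e c z ^ j * (DH h z).det * exp (-(h z ^ 2 / 2)) =
      cG (n + j) * ∫ x : Sph n, (⟪gradient h x, e⟫_ℝ - c) ^ j * ρ x ∂sphMeas n := by
    intro j
    rw [H.hom_integral (H.fD_cont e c j) (H.fD_smul e c j)]
    simp only [hff]
  have q := H.hom_integral (H.QD_cont e c) (H.QD_smul e c)
  simp only [hQ] at q
  have hmain := H.gauss_ineq he c (by rw [p 1]; simp only [pow_one, h1, mul_zero])
  rw [p 2, q, cG_rec, add_zero, mul_comm _ (cG n), mul_assoc] at hmain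
  exact le_of_mul_le_mul_left hmain (cG_pos n)

end SupF

open scoped InnerProductSpace ENNReal Topology


lemma supF_of_body {n : ℕ} {K : Set (Eu n)} (hK : IsSmoothConvexBody K) : SupF (sfn K) := by
  have hne : K.Nonempty := hK.interior_nonempty.mono interior_subset
  have hbdd : ∀ z : Eu n, BddAbove ((fun y => ⟪z, y⟫_ℝ) '' K) := fun z =>
    (hK.compact.image (by fun_prop : Continuous fun y : Eu n => ⟪z, y⟫_ℝ)).bddAbove
  have hle : ∀ z y, y ∈ K → ⟪z, y⟫_ℝ ≤ sfn K z := fun z y hy => le_csSup (hbdd z) ⟨y, hy, rfl⟩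
  have hmax : ∀ z, ∃ y ∈ K, sfn K z = ⟪z, y⟫_ℝ := fun z => by
    obtain ⟨y, hy, he⟩ := hK.compact.exists_sSup_image_eq hne
      (by fun_prop : Continuous fun y : Eu n => ⟪z, y⟫_ℝ).continuousOn
    exact ⟨y, hy, he⟩
  have hom : ∀ r : ℝ, 0 ≤ r → ∀ z, sfn K (r • z) = r * sfn K z := by
    intro r hr z
    apply le_antisymm
    · obtain ⟨y, hy, he⟩ := hmax (r • z)
      rw [he, real_inner_smul_left]
      exact mul_le_mul_of_nonneg_left (hle z y hy) hr
    · obtain ⟨y, hy, he⟩ := hmax z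
      rw [he, ← real_inner_smul_left]
      exact hle _ y hy
  refine ⟨hom, ?_, ?_, hK.smooth, hK.posdef⟩
  · intro a b
    obtain ⟨y, hy, he⟩ := hmax (a + b)
    rw [he, inner_add_left]
    exact add_le_add (hle a y hy) (hle b y hy)
  · intro z hz
    obtain ⟨x, hx⟩ := SupF.exists_sph hz
    rw [hx, hom _ (norm_nonneg _)]
    exact mul_pos (norm_pos_iff.2 hz) (hK.pos x)

instance sphMeas_finite (n : ℕ) : IsFiniteMeasure (sphMeas n) := by
  unfold sphMeas
  infer_instance

lemma sph_integrable {n : ℕ} {F : Type*} [NormedAddCommGroup F] {f : Sph n → F} (hf : Continuous f) :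
    Integrable f (sphMeas n) :=
  hf.integrable_of_hasCompactSupport (HasCompactSupport.of_compactSpace f)

lemma sph_restrict {n : ℕ} {F : Type*} [TopologicalSpace F] {f : Eu n → F}
    (hf : ContinuousOn f {(0 : Eu n)}ᶜ) : Continuous (fun x : Sph n => f x) :=
  hf.comp_continuous continuous_subtype_val fun x => SupF.sph_ne x

/-- The key inequality. -/
theorem key_aux (n : ℕ) 
    (K : Set (Eu n)) (hK : IsSmoothConvexBody K) :
    (n : ℝ) * ∫ x : Sph n, ‖gradient (sfn K) (x : Eu n)‖ ^ 2 * dens K (x : Eu n) ∂sphMeas n ≤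
      (∫ x : Sph n, sfn K (x : Eu n) *
          (LinearMap.trace ℝ (Eu n) (hessA K (x : Eu n) : Eu n →ₗ[ℝ] Eu n)) *
            dens K (x : Eu n) ∂sphMeas n) +
        (n : ℝ) * ‖∫ x : Sph n, dens K (x : Eu n) • gradient (sfn K) (x : Eu n) ∂sphMeas n‖ ^ 2 /
          (∫ x : Sph n, dens K (x : Eu n) ∂sphMeas n) := by
  have H := supF_of_body hK
  set b := EuclideanSpace.basisFun (Fin (n + 1)) ℝ with hb
  have hX : Continuous (fun x : Sph n => gradient (sfn K) x) := sph_restrict H.grad_contDiffOn.continuousOn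
  have hA : Continuous (fun x : Sph n => hessA K x) := sph_restrict H.fderiv_grad_continuousOn
  have hh : Continuous (fun x : Sph n => sfn K x) := H.continuous.comp continuous_subtype_val
  have hdc : Continuous (fun x : Sph n => dens K x) := by
    have ht : Continuous (fun x : Sph n => tens (x : Eu n)) := by
      unfold tens
      fun_prop
    exact hh.mul (ContinuousLinearMap.continuous_det.comp (hA.add ht))
  have hdp : ∀ x : Sph n, 0 < dens K x := fun x =>
    mul_pos (hK.pos x) (SupF.det_pos_of_posdef _ (hK.posdef x))
  set V := ∫ x : Sph n, dens K x ∂sphMeas n with hV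
  set S := ∫ x : Sph n, dens K (x : Eu n) • gradient (sfn K) (x : Eu n) ∂sphMeas n with hS
  have hVint := sph_integrable hdc
  have hSint : Integrable (fun x : Sph n => dens K (x : Eu n) • gradient (sfn K) (x : Eu n)) (sphMeas n) :=
    sph_integrable (hdc.smul hX)
  have hVpos : 0 < V := by
    rw [hV, integral_pos_iff_support_of_nonneg (fun x => (hdp x).le) hVint]
    have : Function.support (fun x : Sph n => dens K x) = Set.univ := by
      ext x
      simp [(hdp x).ne']
    rw [this, sphMeas]
    have h0 : (volume : Measure (Eu n)).toSphere ≠ 0 := by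
      rw [Ne, Measure.toSphere_eq_zero_iff_finrank]
      simp
    exact pos_iff_ne_zero.2 fun hu => h0 (Measure.measure_univ_eq_zero.1 hu)
  set C := V⁻¹ • S with hC
  have hinner : ∀ v : Eu n, ∫ x : Sph n, ⟪gradient (sfn K) x, v⟫_ℝ * dens K x ∂sphMeas n = ⟪S, v⟫_ℝ := by
    intro v
    rw [real_inner_comm, hS, ← integral_inner hSint]
    congr 1
    ext x
    rw [real_inner_smul_right, real_inner_comm]
    ring
  have hcoord : ∀ i, (n : ℝ) * ∫ x : Sph n, (⟪gradient (sfn K) x, b i⟫_ℝ - ⟪C, b i⟫_ℝ) ^ 2 * dens K x ∂sphMeas n ≤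
      ∫ x : Sph n, (sfn K x * ⟪hessA K x (b i), b i⟫_ℝ) * dens K x ∂sphMeas n := by
    intro i
    have hi := H.sphere_ineq (e := b i) (b.norm_eq_one i) ⟪C, b i⟫_ℝ (fun x => dens K x) (fun x => rfl) (by
      have h1 : ∀ x : Sph n, (⟪gradient (sfn K) x, b i⟫_ℝ - ⟪C, b i⟫_ℝ) * dens K x =
        ⟪gradient (sfn K) x, b i⟫_ℝ * dens K x - ⟪C, b i⟫_ℝ * dens K x := fun x => by ring
      simp only [h1]
      rw [integral_sub (sph_integrable (by fun_prop)) (hVint.const_mul _), hinner, integral_const_mul, ← hV, hC,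
        real_inner_smul_left]
      field_simp
      ring)
    have h2 : ∀ x : Sph n, (sfn K x * ⟪fderiv ℝ (gradient (sfn K)) (x : Eu n) (b i), b i⟫_ℝ +
        (⟪gradient (sfn K) x, b i⟫_ℝ - ⟪C, b i⟫_ℝ) ^ 2) * dens K x =
        (sfn K x * ⟪hessA K x (b i), b i⟫_ℝ) * dens K x +
        (⟪gradient (sfn K) x, b i⟫_ℝ - ⟪C, b i⟫_ℝ) ^ 2 * dens K x := fun x => by rw [hessA]; ring
    simp only [h2] at hi
    rw [integral_add (sph_integrable (by fun_prop)) (sph_integrable (by fun_prop))] at hi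
    linarith
  have hsum := Finset.sum_le_sum fun i (_ : i ∈ Finset.univ) => hcoord i
  rw [← Finset.mul_sum, ← integral_finsetSum _ fun i _ => sph_integrable (by fun_prop),
    ← integral_finsetSum _ fun i _ => sph_integrable (by fun_prop)] at hsum
  have hL : ∀ x : Sph n, ∑ i, (⟪gradient (sfn K) x, b i⟫_ℝ - ⟪C, b i⟫_ℝ) ^ 2 * dens K x =
      ‖gradient (sfn K) (x : Eu n)‖ ^ 2 * dens K x - 2 * (⟪gradient (sfn K) x, C⟫_ℝ * dens K x)
        + ‖C‖ ^ 2 * dens K x := by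
    intro x
    have h3 := b.sum_sq_inner_right (gradient (sfn K) (x : Eu n) - C)
    rw [← Finset.sum_mul]
    have h4 : ∑ i, (⟪gradient (sfn K) x, b i⟫_ℝ - ⟪C, b i⟫_ℝ) ^ 2 = ‖gradient (sfn K) (x : Eu n) - C‖ ^ 2 := by
      rw [← h3]
      refine Finset.sum_congr rfl fun i _ => ?_
      rw [real_inner_comm (_ - _), inner_sub_left]
    rw [h4, norm_sub_sq_real]
    ring
  have hR : ∀ x : Sph n, ∑ i, sfn K x * ⟪hessA K x (b i), b i⟫_ℝ * dens K x =
      sfn K (x : Eu n) * (LinearMap.trace ℝ (Eu n) (hessA K (x : Eu n) : Eu n →ₗ[ℝ] Eu n)) *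
            dens K (x : Eu n) := by
    intro x
    rw [LinearMap.trace_eq_sum_inner _ b, ← Finset.sum_mul, ← Finset.mul_sum]
    congr 2
    refine Finset.sum_congr rfl fun i _ => ?_
    rw [real_inner_comm]
    rfl
  simp only [hL, hR] at hsum
  have i1 : Integrable (fun x : Sph n => ‖gradient (sfn K) (x : Eu n)‖ ^ 2 * dens K x) (sphMeas n) :=
    sph_integrable (by fun_prop)
  have i2 : Integrable (fun x : Sph n => 2 * (⟪gradient (sfn K) x, C⟫_ℝ * dens K x)) (sphMeas n) :=
    sph_integrable (by fun_prop)
  have i3 : Integrable (fun x : Sph n => ‖gradient (sfn K) (x : Eu n)‖ ^ 2 * dens K x -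
    2 * (⟪gradient (sfn K) x, C⟫_ℝ * dens K x)) (sphMeas n) := i1.sub i2
  rw [integral_add i3 (hVint.const_mul _), integral_sub i1 i2, integral_const_mul, integral_const_mul,
    hinner, ← hV] at hsum
  have hSC : ⟪S, C⟫_ℝ = ‖S‖ ^ 2 / V := by
    rw [hC, real_inner_smul_right, real_inner_self_eq_norm_sq]
    field_simp
  have hCC : ‖C‖ ^ 2 * V = ‖S‖ ^ 2 / V := by
    rw [hC, norm_smul, mul_pow, Real.norm_of_nonneg (by positivity)]
    field_simp
  rw [hSC, hCC] at hsum
  rw [mul_div_assoc]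
  linarith

/-- The key inequality `n ∫ |X|² dV ≤ ∫ h (Δ̄h + nh) dV + n |∫ X dV|² / ∫ dV`,
where `Δ̄h + nh = tr A` and `dV = (h/𝒦) dθ`. -/
theorem key_inequality (n : ℕ) (hn : 1 ≤ n)
    (K : Set (Eu n)) (hK : IsSmoothConvexBody K) :
    (n : ℝ) * ∫ x : Sph n, ‖gradient (sfn K) (x : Eu n)‖ ^ 2 * dens K (x : Eu n) ∂sphMeas n ≤
      (∫ x : Sph n, sfn K (x : Eu n) *
          (LinearMap.trace ℝ (Eu n) (hessA K (x : Eu n) : Eu n →ₗ[ℝ] Eu n)) *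
            dens K (x : Eu n) ∂sphMeas n) +
        (n : ℝ) * ‖∫ x : Sph n, dens K (x : Eu n) • gradient (sfn K) (x : Eu n) ∂sphMeas n‖ ^ 2 /
          (∫ x : Sph n, dens K (x : Eu n) ∂sphMeas n) := by
  exact key_aux n K hK
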